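/- arXiv:2105.01532 — 4 statements merged into one kernel-verified Lean document; each statement's English description precedes it below -/
import Mathlib

section
/- Let n ≥ 5 be odd. In Sym(2n), let G₁₂₃ = ⟨t₁, t₂, t₃⟩ with t₁ = ∏_{i=0}^{⌊(n-2)/2⌋}(1+2i,2+2i)(n+1+2i,n+2+2i), t₂ = ∏_{i=1}^{⌊(n-3)/2⌋}(2+2i,3+2i)(n+2+2i,n+3+2i), t₃ = (1,3)(2,4)(n+1,n+3)(n+2,n+4). Then for every 1 ≤ i < n, the permutation (i,i+1)(n+i,n+i+1) belongs to G₁₂₃. -/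
open Equiv

/-- `t₁ = ∏_{i=0}^{⌊(n-2)/2⌋} (1+2i, 2+2i)(n+1+2i, n+2+2i)` in `Sym(2n)` (as a
permutation of `ℕ`). -/
def t1 (n : ℕ) : Equiv.Perm ℕ :=
  ((List.range ((n - 2) / 2 + 1)).map
    (fun i => Equiv.swap (1 + 2*i) (2 + 2*i) * Equiv.swap (n+1+2*i) (n+2+2*i))).prod

/-- `t₂ = ∏_{i=1}^{⌊(n-3)/2⌋} (2+2i, 3+2i)(n+2+2i, n+3+2i)`. -/
def t2 (n : ℕ) : Equiv.Perm ℕ :=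
  ((List.range ((n - 3) / 2)).map
    (fun j => Equiv.swap (2 + 2*(j+1)) (3 + 2*(j+1)) *
      Equiv.swap (n+2+2*(j+1)) (n+3+2*(j+1)))).prod

/-- `t₃ = (1,3)(2,4)(n+1,n+3)(n+2,n+4)`. -/
def t3 (n : ℕ) : Equiv.Perm ℕ :=
  Equiv.swap 1 3 * Equiv.swap 2 4 * Equiv.swap (n+1) (n+3) * Equiv.swap (n+2) (n+4)

/-- `t₄ = (1,2)(n+1,n+2) ∏_{i=1}^{n-2} (2+i, n+2+i)`. -/
def t4 (n : ℕ) : Equiv.Perm ℕ :=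
  Equiv.swap 1 2 * Equiv.swap (n+1) (n+2) *
    ((List.range (n - 2)).map (fun j => Equiv.swap (2 + (j+1)) (n+2+(j+1)))).prod

/-- The double transposition `(a,b)(n+a,n+b)`. -/
def bt (n a b : ℕ) : Equiv.Perm ℕ := Equiv.swap a b * Equiv.swap (n+a) (n+b)

/-- Cyclic sequence `3,4,6,…,2m,2m+1,2m-1,…,5`. -/
def qs (m j : ℕ) : ℕ :=
  if j % (2*m-1) = 0 then 3 else if j % (2*m-1) < m then 2 * (j % (2*m-1)) + 2
  else 4*m+1 - 2 * (j % (2*m-1))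

theorem prod_apply_aux (n a : ℕ) (k : ℕ) (hk : a + 2 * k ≤ n + a) (x : ℕ) :
    ((List.range k).map (fun i => Equiv.swap (a + 2*i) (a + 1 + 2*i) *
      Equiv.swap (n+a+2*i) (n+a+1+2*i))).prod x =
    if (a ≤ x ∧ x < a + 2*k) then (if (x - a) % 2 = 0 then x + 1 else x - 1)
    else if (n + a ≤ x ∧ x < n + a + 2*k) then
      (if (x - n - a) % 2 = 0 then x + 1 else x - 1) else x := by
  induction k generalizing x with
  | zero =>
    simp only [List.range_zero, List.map_nil, List.prod_nil, Equiv.Perm.one_apply]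
    split_ifs <;> omega
  | succ k ih =>
    rw [List.range_succ, List.map_append, List.prod_append]
    simp only [List.map_cons, List.map_nil, List.prod_cons, List.prod_nil, mul_one,
      Equiv.Perm.mul_apply]
    rw [ih (by omega)]
    have h2 : Equiv.swap (a + 2*k) (a + 1 + 2*k) (Equiv.swap (n+a+2*k) (n+a+1+2*k) x) =
      if x = a + 2*k then x + 1 else if x = a + 1 + 2*k then x - 1 else
      if x = n+a+2*k then x + 1 else if x = n+a+1+2*k then x - 1 else x := by
      simp only [Equiv.swap_apply_def]
      split_ifs <;> omega
    rw [h2]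
    split_ifs <;> omega

theorem t1_apply (m : ℕ) (hm : 2 ≤ m) (x : ℕ) : t1 (2*m+1) x =
    if (1 ≤ x ∧ x < 1 + 2*m) then (if (x - 1) % 2 = 0 then x + 1 else x - 1)
    else if (2*m+1 + 1 ≤ x ∧ x < 2*m+1 + 1 + 2*m) then
      (if (x - (2*m+1) - 1) % 2 = 0 then x + 1 else x - 1) else x := by
  rw [← prod_apply_aux (2*m+1) 1 m (by omega) x]
  unfold t1
  rw [show (2*m+1-2)/2+1 = m by omega]

theorem t2_apply (m : ℕ) (hm : 2 ≤ m) (x : ℕ) : t2 (2*m+1) x =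
    if (4 ≤ x ∧ x < 4 + 2*(m-1)) then (if (x - 4) % 2 = 0 then x + 1 else x - 1)
    else if (2*m+1 + 4 ≤ x ∧ x < 2*m+1 + 4 + 2*(m-1)) then
      (if (x - (2*m+1) - 4) % 2 = 0 then x + 1 else x - 1) else x := by
  rw [← prod_apply_aux (2*m+1) 4 (m-1) (by omega) x]
  unfold t2
  rw [show (2*m+1-3)/2 = m-1 by omega]
  have : (fun j => Equiv.swap (2 + 2*(j+1)) (3 + 2*(j+1)) *
      Equiv.swap (2*m+1+2+2*(j+1)) (2*m+1+3+2*(j+1))) =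
      (fun i => Equiv.swap (4 + 2*i) (4 + 1 + 2*i) *
      Equiv.swap (2*m+1+4+2*i) (2*m+1+4+1+2*i)) := by
    funext j
    congr 2 <;> ring
  rw [this]

/-- pointwise action of `t1 * t2` on `x` -/
theorem r_lo (m : ℕ) (hm : 2 ≤ m) (x : ℕ) (h3 : 3 ≤ x) (hx : x ≤ 2*m+1) :
    (t1 (2*m+1) * t2 (2*m+1)) x = (if x = 3 then 4 else if x % 2 = 0 then
      (if x = 2*m then 2*m+1 else x+2) else if x = 5 then 3 else x - 2) ∧
    (t1 (2*m+1) * t2 (2*m+1)) (2*m+1+x) = 2*m+1+(if x = 3 then 4 else if x % 2 = 0 then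
      (if x = 2*m then 2*m+1 else x+2) else if x = 5 then 3 else x - 2) := by
  simp only [Equiv.Perm.mul_apply]
  constructor
  · have h2 : t2 (2*m+1) x = if x = 3 then 3 else if x % 2 = 0 then x+1 else x-1 := by
      rw [t2_apply m hm]; split_ifs <;> omega
    rw [h2, t1_apply m hm]; split_ifs <;> omega
  · have h2 : t2 (2*m+1) (2*m+1+x) =
        2*m+1+(if x = 3 then 3 else if x % 2 = 0 then x+1 else x-1) := by
      rw [t2_apply m hm]; split_ifs <;> omega
    rw [h2, t1_apply m hm]; split_ifs <;> omega

theorem qs_bounds (m : ℕ) (hm : 2 ≤ m) (j : ℕ) : 3 ≤ qs m j ∧ qs m j ≤ 2*m+1 := by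
  have : j % (2*m-1) < 2*m-1 := Nat.mod_lt _ (by omega)
  unfold qs
  split_ifs <;> omega

theorem mod_succ_aux (j d : ℕ) (hd : 2 ≤ d) :
    (j+1) % d = if j % d + 1 = d then 0 else j % d + 1 := by
  have : j % d < d := Nat.mod_lt _ (by omega)
  rw [Nat.add_mod, Nat.mod_eq_of_lt (show 1 < d by omega)]
  split_ifs with h
  · rw [h, Nat.mod_self]
  · exact Nat.mod_eq_of_lt (by omega)

theorem qs_succ (m : ℕ) (hm : 2 ≤ m) (j : ℕ) :
    (t1 (2*m+1) * t2 (2*m+1)) (qs m j) = qs m (j+1) ∧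
    (t1 (2*m+1) * t2 (2*m+1)) (2*m+1+qs m j) = 2*m+1+qs m (j+1) := by
  have hb := qs_bounds m hm j
  have h := r_lo m hm _ hb.1 hb.2
  have key : (if qs m j = 3 then 4 else if qs m j % 2 = 0 then
      (if qs m j = 2*m then 2*m+1 else qs m j+2) else if qs m j = 5 then 3 else qs m j - 2)
      = qs m (j+1) := by
    have hlt : j % (2*m-1) < 2*m-1 := Nat.mod_lt _ (by omega)
    have hs := mod_succ_aux j (2*m-1) (by omega)
    unfold qs
    rw [hs]
    clear hs h hb
    generalize j % (2*m-1) = r at *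
    by_cases hr : r + 1 = 2*m-1
    · rw [if_pos hr]
      split_ifs <;> omega
    · rw [if_neg hr]
      by_cases h0 : r = 0
      · subst h0
        split_ifs <;> first | omega | contradiction
      · simp only [if_neg h0]
        by_cases h1 : r < m
        · simp only [if_pos h1]
          split_ifs <;> first | omega | contradiction
        · simp only [if_neg h1]
          split_ifs <;> first | omega | contradiction
  rw [key] at h
  exact h

theorem qs_surj (m : ℕ) (hm : 2 ≤ m) (x : ℕ) (h3 : 3 ≤ x) (hx : x ≤ 2*m+1) :
    ∃ j, qs m j = x := by
  by_cases h : x = 3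
  · exact ⟨0, by simp [qs, h]⟩
  by_cases he : x % 2 = 0
  · refine ⟨(x-2)/2, ?_⟩
    unfold qs
    rw [Nat.mod_eq_of_lt (by omega)]
    split_ifs <;> omega
  · refine ⟨(4*m+1-x)/2, ?_⟩
    unfold qs
    rw [Nat.mod_eq_of_lt (by omega)]
    split_ifs <;> omega

theorem r_pow_qs (m : ℕ) (hm : 2 ≤ m) (j k : ℕ) :
    ((t1 (2*m+1) * t2 (2*m+1))^k) (qs m j) = qs m (j+k) ∧
    ((t1 (2*m+1) * t2 (2*m+1))^k) (2*m+1+qs m j) = 2*m+1+qs m (j+k) := by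
  induction k with
  | zero => simp
  | succ k ih =>
    generalize hf : t1 (2*m+1) * t2 (2*m+1) = f at *
    have h := qs_succ m hm (j+k)
    rw [hf] at h
    rw [pow_succ', Equiv.Perm.mul_apply, Equiv.Perm.mul_apply, ih.1, ih.2]
    exact h

theorem r_pow_two (f : Equiv.Perm ℕ) (a b : ℕ) (h1 : f a = b) (h2 : f b = a) (k : ℕ) :
    (f^(2*k+1)) a = b := by
  induction k with
  | zero => simpa
  | succ k ih =>
    rw [show 2*(k+1)+1 = (2*k+1)+1+1 by ring, pow_succ', pow_succ', Equiv.Perm.mul_apply,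
      Equiv.Perm.mul_apply, ih, h2, h1]

theorem r_pow_fix (f : Equiv.Perm ℕ) (a : ℕ) (h1 : f a = a) (k : ℕ) :
    (f^k) a = a := by
  induction k with
  | zero => simp
  | succ k ih => rw [pow_succ', Equiv.Perm.mul_apply, ih, h1]

theorem r_small (m : ℕ) (hm : 2 ≤ m) (x : ℕ)
    (h : x < 3 ∨ (2*m+1 < x ∧ x < 2*m+1+3) ∨ 2*(2*m+1) < x) :
    (t1 (2*m+1) * t2 (2*m+1)) x = if x = 1 then 2 else if x = 2 then 1 else
      if x = 2*m+1+1 then 2*m+1+2 else if x = 2*m+1+2 then 2*m+1+1 else x := by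
  have h2 : t2 (2*m+1) x = x := by rw [t2_apply m hm]; split_ifs <;> omega
  rw [Equiv.Perm.mul_apply, h2, t1_apply m hm]
  split_ifs <;> omega

theorem r_pow (m : ℕ) (hm : 2 ≤ m) :
    (t1 (2*m+1) * t2 (2*m+1))^(2*m-1) = bt (2*m+1) 1 2 := by
  have hq : ∀ j, qs m (j + (2*m-1)) = qs m j := by intro j; simp [qs]
  have hodd : 2*m-1 = 2*(m-1)+1 := by omega
  have hbt : ∀ x, bt (2*m+1) 1 2 x = if x = 1 then 2 else if x = 2 then 1 else
      if x = 2*m+1+1 then 2*m+1+2 else if x = 2*m+1+2 then 2*m+1+1 else x := by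
    intro x
    simp only [bt, Equiv.Perm.mul_apply, Equiv.swap_apply_def]
    split_ifs <;> omega
  ext x
  rw [hbt]
  by_cases h1 : 3 ≤ x ∧ x ≤ 2*m+1
  · obtain ⟨j, rfl⟩ := qs_surj m hm x h1.1 h1.2
    rw [(r_pow_qs m hm j _).1, hq]
    split_ifs <;> omega
  by_cases h2 : 2*m+1+3 ≤ x ∧ x ≤ 2*(2*m+1)
  · obtain ⟨j, hj⟩ := qs_surj m hm (x-(2*m+1)) (by omega) (by omega)
    obtain rfl : x = 2*m+1+qs m j := by omega
    rw [(r_pow_qs m hm j _).2, hq]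
    split_ifs <;> omega
  have hr : ∀ y, _ → _ := r_small m hm
  by_cases hx : x = 1 ∨ x = 2 ∨ x = 2*m+1+1 ∨ x = 2*m+1+2
  · rw [hodd]
    apply r_pow_two
    · rw [hr x (by omega)]
    · rw [hr _ (by split_ifs <;> omega)]
      split_ifs <;> omega
  · rw [r_pow_fix]
    · split_ifs <;> omega
    · rw [hr x (by omega)]
      split_ifs <;> omega

theorem bt_conj (n : ℕ) (H : Subgroup (Equiv.Perm ℕ)) (g : Equiv.Perm ℕ) (hg : g ∈ H)
    (a b a' b' : ℕ) (h : bt n a b ∈ H) (h1 : g a = a') (h2 : g b = b')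
    (h3 : g (n+a) = n+a') (h4 : g (n+b) = n+b') : bt n a' b' ∈ H := by
  have : bt n a' b' = g * bt n a b * g⁻¹ := by
    unfold bt
    rw [← h3, ← h4, ← h1, ← h2, Equiv.swap_apply_apply, Equiv.swap_apply_apply]
    group
  rw [this]
  exact H.mul_mem (H.mul_mem hg h) (H.inv_mem hg)

theorem bt_self (n : ℕ) (H : Subgroup (Equiv.Perm ℕ)) (a : ℕ) : bt n a a ∈ H := by
  have : bt n a a = 1 := by
    ext x
    simp [bt]
  rw [this]
  exact H.one_mem

theorem bt_symm (n : ℕ) (H : Subgroup (Equiv.Perm ℕ)) (a b : ℕ) (h : bt n a b ∈ H) :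
    bt n b a ∈ H := by
  unfold bt at *
  rwa [Equiv.swap_comm b a, Equiv.swap_comm (n+b)]

theorem bt_trans (n : ℕ) (H : Subgroup (Equiv.Perm ℕ)) (a b c : ℕ)
    (ha : 1 ≤ a ∧ a ≤ n) (hb : 1 ≤ b ∧ b ≤ n) (hc : 1 ≤ c ∧ c ≤ n)
    (h : bt n a b ∈ H) (h' : bt n b c ∈ H) : bt n a c ∈ H := by
  by_cases hab : a = b
  · rwa [hab]
  by_cases hac : a = c
  · subst hac
    exact bt_self n H a
  apply bt_conj n H _ h' a b a c h <;>
  · simp only [bt, Equiv.Perm.mul_apply, Equiv.swap_apply_def]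
    split_ifs <;> omega

theorem t3_apply (n : ℕ) (hn : 5 ≤ n) (x : ℕ) : t3 n x =
    if x = 1 ∨ x = 2 ∨ x = n+1 ∨ x = n+2 then x + 2 else
    if x = 3 ∨ x = 4 ∨ x = n+3 ∨ x = n+4 then x - 2 else x := by
  have h1 : Equiv.swap (n+1) (n+3) (Equiv.swap (n+2) (n+4) x) =
      if x = n+1 ∨ x = n+2 then x + 2 else if x = n+3 ∨ x = n+4 then x - 2 else x := by
    simp only [Equiv.swap_apply_def]
    split_ifs <;> omega
  have h2 : ∀ y, Equiv.swap 1 3 (Equiv.swap 2 4 y) =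
      if y = 1 ∨ y = 2 then y + 2 else if y = 3 ∨ y = 4 then y - 2 else y := by
    intro y
    simp only [Equiv.swap_apply_def]
    split_ifs <;> omega
  simp only [t3, Equiv.Perm.mul_apply]
  rw [h1, h2]
  split_ifs <;> omega

/-- For odd `n ≥ 5` and each `1 ≤ i < n`, the permutation `(i,i+1)(n+i,n+i+1)`
lies in `G₁₂₃ = ⟨t₁, t₂, t₃⟩`. -/
theorem beta_mem_G123 (n : ℕ) (hn : 5 ≤ n) (hodd : Odd n) (i : ℕ)
    (hi1 : 1 ≤ i) (hin : i < n) :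
    Equiv.swap i (i+1) * Equiv.swap (n+i) (n+i+1) ∈
      Subgroup.closure {t1 n, t2 n, t3 n} := by
  obtain ⟨m, rfl⟩ := hodd
  have hm : 2 ≤ m := by omega
  have m1 : t1 (2*m+1) ∈ Subgroup.closure {t1 (2*m+1), t2 (2*m+1), t3 (2*m+1)} :=
    Subgroup.subset_closure (by simp)
  have m2 : t2 (2*m+1) ∈ Subgroup.closure {t1 (2*m+1), t2 (2*m+1), t3 (2*m+1)} :=
    Subgroup.subset_closure (by simp)
  have m3 : t3 (2*m+1) ∈ Subgroup.closure {t1 (2*m+1), t2 (2*m+1), t3 (2*m+1)} :=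
    Subgroup.subset_closure (by simp)
  generalize Subgroup.closure {t1 (2*m+1), t2 (2*m+1), t3 (2*m+1)} = H at *
  have hr := H.mul_mem m1 m2
  have b12 : bt (2*m+1) 1 2 ∈ H := by
    rw [← r_pow m hm]; exact H.pow_mem hr _
  have b34 : bt (2*m+1) 3 4 ∈ H := by
    apply bt_conj _ H _ m3 1 2 3 4 b12 <;>
    · rw [t3_apply _ (by omega)]
      split_ifs <;> omega
  have q0 : qs m 0 = 3 := by simp [qs]
  have q1 : qs m 1 = 4 := by
    unfold qs
    rw [Nat.mod_eq_of_lt (by omega)]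
    split_ifs <;> first | omega | contradiction
  have bq : ∀ j, bt (2*m+1) (qs m j) (qs m (j+1)) ∈ H := by
    intro j
    induction j with
    | zero => rw [q0, q1]; exact b34
    | succ j ih =>
      exact bt_conj _ H _ hr _ _ _ _ ih (qs_succ m hm j).1 (qs_succ m hm (j+1)).1
        (qs_succ m hm j).2 (qs_succ m hm (j+1)).2
  have b3q : ∀ j, bt (2*m+1) 3 (qs m j) ∈ H := by
    intro j
    induction j with
    | zero => rw [q0]; exact bt_self _ H 3
    | succ j ih =>
      have h1 := qs_bounds m hm j
      have h2 := qs_bounds m hm (j+1)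
      exact bt_trans _ H 3 (qs m j) _ (by omega) (by omega) (by omega) ih (bq j)
  have b3 : ∀ x, 3 ≤ x → x ≤ 2*m+1 → bt (2*m+1) 3 x ∈ H := by
    intro x h h'
    obtain ⟨j, rfl⟩ := qs_surj m hm x h h'
    exact b3q j
  have b45 : bt (2*m+1) 4 5 ∈ H :=
    bt_trans _ H 4 3 5 (by omega) (by omega) (by omega) (bt_symm _ H _ _ b34)
      (b3 5 (by omega) (by omega))
  have b25 : bt (2*m+1) 2 5 ∈ H := by
    apply bt_conj _ H _ m3 4 5 2 5 b45 <;>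
    · rw [t3_apply _ (by omega)]
      split_ifs <;> omega
  have b32 : bt (2*m+1) 3 2 ∈ H :=
    bt_trans _ H 3 5 2 (by omega) (by omega) (by omega) (b3 5 (by omega) (by omega))
      (bt_symm _ H _ _ b25)
  have b31 : bt (2*m+1) 3 1 ∈ H :=
    bt_trans _ H 3 2 1 (by omega) (by omega) (by omega) b32 (bt_symm _ H _ _ b12)
  have ball : ∀ x, 1 ≤ x → x ≤ 2*m+1 → bt (2*m+1) 3 x ∈ H := by
    intro x h h'
    by_cases hx1 : x = 1
    · rw [hx1]; exact b31
    by_cases hx2 : x = 2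
    · rw [hx2]; exact b32
    exact b3 x (by omega) h'
  exact bt_trans (2*m+1) H i 3 (i+1) (by omega) (by omega) (by omega)
    (bt_symm _ H _ _ (ball i hi1 (by omega))) (ball (i+1) (by omega) (by omega))
end

section
/- Let n ≥ 5 be odd. The group G = ⟨t₁, t₂, t₃, t₄⟩ ≤ Sym(2n), with t₁, t₂, t₃, t₄ as defined, is isomorphic to the Coxeter group of type Bₙ, i.e., to the hyperoctahedral group ℤ₂ ≀ Sym(n) of order 2ⁿ·n!. -/
open Equiv

/-- `β₀ = (1,n+1)` and `βᵢ = (i,i+1)(n+i,n+i+1)` for `1 ≤ i < n`. -/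
def β (n i : ℕ) : Equiv.Perm ℕ :=
  if i = 0 then Equiv.swap 1 (n+1)
  else Equiv.swap i (i+1) * Equiv.swap (n+i) (n+i+1)

/-- The realization of the Coxeter group of type `Bₙ` inside `Sym(2n)`,
generated by `β₀, β₁, …, β_{n-1}`. -/
def Bgrp (n : ℕ) : Subgroup (Equiv.Perm ℕ) :=
  Subgroup.closure {x | ∃ i < n, x = β n i}

namespace BnProof

/-- Embedding of signed indices into `ℕ`. -/
def emb (n : ℕ) : Fin n × Bool ↪ ℕ where
  toFun p := p.1.val + 1 + (if p.2 then n else 0)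
  inj' := by
    rintro ⟨i, b⟩ ⟨j, c⟩ h
    have hi := i.2
    have hj := j.2
    cases b <;> cases c <;> simp at h ⊢ <;> omega

lemma emb_false (n : ℕ) (i : Fin n) : emb n (i, false) = i.val + 1 := rfl
lemma emb_true (n : ℕ) (i : Fin n) : emb n (i, true) = i.val + 1 + n := rfl

noncomputable def V (n : ℕ) : Equiv.Perm (Fin n × Bool) →* Equiv.Perm ℕ :=
  Equiv.Perm.viaEmbeddingHom (emb n)

lemma V_inj (n : ℕ) : Function.Injective (V n) := Equiv.Perm.viaEmbeddingHom_injective _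

lemma V_swap (n : ℕ) (a b : Fin n × Bool) :
    V n (Equiv.swap a b) = Equiv.swap (emb n a) (emb n b) := by
  ext x
  by_cases hx : x ∈ Set.range (emb n)
  · obtain ⟨y, rfl⟩ := hx
    change Equiv.Perm.viaEmbedding _ _ _ = _
    rw [Equiv.Perm.viaEmbedding_apply, (emb n).injective.map_swap]
  · change Equiv.Perm.viaEmbedding _ _ _ = _
    rw [Equiv.Perm.viaEmbedding_apply_of_notMem _ _ _ hx, Equiv.swap_apply_of_ne_of_ne]
    · rintro rfl; exact hx ⟨_, rfl⟩
    · rintro rfl; exact hx ⟨_, rfl⟩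

noncomputable def E (n : ℕ) : Equiv.Perm (Fin n) →* Equiv.Perm ℕ :=
  (V n).comp
    { toFun := fun σ => Equiv.prodShear σ (fun _ => 1)
      map_one' := by ext ⟨i, b⟩ <;> simp
      map_mul' := by intro σ τ; ext ⟨i, b⟩ <;> simp }

noncomputable def F (n : ℕ) : (Fin n → Equiv.Perm Bool) →* Equiv.Perm ℕ :=
  (V n).comp
    { toFun := fun e => Equiv.prodShear 1 e
      map_one' := by ext ⟨i, b⟩ <;> simp
      map_mul' := by intro σ τ; ext ⟨i, b⟩ <;> simp }

lemma EF (n : ℕ) (σ : Equiv.Perm (Fin n)) (e : Fin n → Equiv.Perm Bool) :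
    E n σ * F n e = V n (Equiv.prodShear σ e) := by
  change V n _ * V n _ = _
  rw [← map_mul]
  congr 1

lemma FE (n : ℕ) (σ : Equiv.Perm (Fin n)) (e : Fin n → Equiv.Perm Bool) :
    F n e * E n σ = E n σ * F n (fun i => e (σ i)) := by
  rw [EF]
  change V n _ * V n _ = _
  rw [← map_mul]
  congr 1
  ext ⟨i, b⟩ : 1
  simp

def W (n : ℕ) : Subgroup (Equiv.Perm ℕ) where
  carrier := Set.range (fun p : Equiv.Perm (Fin n) × (Fin n → Equiv.Perm Bool) => E n p.1 * F n p.2)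
  one_mem' := ⟨(1, 1), by simp⟩
  mul_mem' := by
    rintro _ _ ⟨⟨σ, e⟩, rfl⟩ ⟨⟨τ, f⟩, rfl⟩
    refine ⟨(σ * τ, (fun i => e (τ i)) * f), ?_⟩
    simp only [map_mul]
    rw [mul_assoc, mul_assoc, ← mul_assoc (F n e), FE]
    simp only [mul_assoc]
  inv_mem' := by
    rintro _ ⟨⟨σ, e⟩, rfl⟩
    refine ⟨(σ⁻¹, fun i => e⁻¹ (σ⁻¹ i)), ?_⟩
    simp only [mul_inv_rev, ← map_inv]
    rw [FE]

lemma EF_inj (n : ℕ) : Function.Injective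
    (fun p : Equiv.Perm (Fin n) × (Fin n → Equiv.Perm Bool) => E n p.1 * F n p.2) := by
  rintro ⟨σ, e⟩ ⟨τ, f⟩ h
  simp only [EF] at h
  have h := V_inj n h
  have h1 : ∀ i b, (σ i, e i b) = (τ i, f i b) := fun i b => by
    have := congrArg (fun g : Equiv.Perm (Fin n × Bool) => g (i, b)) h
    simpa using this
  ext i
  · have := h1 i true
    simp at this
    simp [this.1]
  · rename_i b
    have := h1 i b
    simp at this
    simp [this.2]

lemma card_W (n : ℕ) : Nat.card (W n) = 2 ^ n * Nat.factorial n := by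
  change Nat.card (Set.range (fun p : Equiv.Perm (Fin n) × (Fin n → Equiv.Perm Bool) => E n p.1 * F n p.2)) = _
  rw [Nat.card_range_of_injective (EF_inj n)]
  simp [Nat.card_eq_fintype_card, Fintype.card_perm, mul_comm]

lemma E_mem_W (n : ℕ) (σ) : E n σ ∈ W n := ⟨(σ, 1), by simp⟩
lemma F_mem_W (n : ℕ) (e) : F n e ∈ W n := ⟨(1, e), by simp⟩

lemma W_le (n : ℕ) (H : Subgroup (Equiv.Perm ℕ)) (h1 : ∀ σ, E n σ ∈ H) (h2 : ∀ e, F n e ∈ H) :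
    W n ≤ H := by
  rintro _ ⟨⟨σ, e⟩, rfl⟩
  exact H.mul_mem (h1 _) (h2 _)

lemma E_swap (n : ℕ) (i j : Fin n) : E n (Equiv.swap i j) =
    Equiv.swap (i.val + 1) (j.val + 1) * Equiv.swap (n + i.val + 1) (n + j.val + 1) := by
  have h1 := V_swap n (i, false) (j, false)
  have h2 := V_swap n (i, true) (j, true)
  simp only [emb_false, emb_true] at h1 h2
  rw [show n + i.val + 1 = i.val + 1 + n by ring, show n + j.val + 1 = j.val + 1 + n by ring, ← h1, ← h2,
    ← map_mul]
  change V n _ = _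
  congr 1
  ext ⟨k, b⟩ : 1
  cases b <;> simp [Equiv.swap_apply_def] <;> split_ifs <;> simp_all

def fl : Equiv.Perm Bool := Equiv.swap false true

lemma perm_bool (p : Equiv.Perm Bool) : p = 1 ∨ p = fl := by revert p; decide

lemma F_single (n : ℕ) (i : Fin n) : F n (Pi.mulSingle i fl) =
    Equiv.swap (i.val + 1) (n + i.val + 1) := by
  have h1 := V_swap n (i, false) (i, true)
  simp only [emb_false, emb_true] at h1
  rw [show n + i.val + 1 = i.val + 1 + n by ring, ← h1]
  change V n _ = _
  congr 1
  ext ⟨k, b⟩ : 1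
  by_cases hk : k = i
  · subst hk
    cases b <;> simp [fl]
  · cases b <;> simp [Equiv.swap_apply_def, hk]

/-- General criterion: a subgroup containing all pure swaps and one flip contains `W`. -/
lemma all_E (n : ℕ) (H : Subgroup (Equiv.Perm ℕ)) (h : ∀ i j, E n (Equiv.swap i j) ∈ H) (σ) :
    E n σ ∈ H := by
  have : (⊤ : Subgroup (Equiv.Perm (Fin n))) ≤ H.comap (E n) := by
    rw [← Equiv.Perm.closure_isSwap, Subgroup.closure_le]
    rintro _ ⟨i, j, -, rfl⟩
    exact h i j
  exact this (Subgroup.mem_top σ)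

lemma conj_F (n : ℕ) (H : Subgroup (Equiv.Perm ℕ)) (h : ∀ σ, E n σ ∈ H) (e) (he : F n e ∈ H)
    (σ : Equiv.Perm (Fin n)) : F n (fun i => e (σ i)) ∈ H := by
  have : F n (fun i => e (σ i)) = (E n σ)⁻¹ * (F n e * E n σ) := by
    rw [FE]; group
  rw [this]
  exact H.mul_mem (H.inv_mem (h _)) (H.mul_mem he (h _))

lemma W_le_of (n : ℕ) (H : Subgroup (Equiv.Perm ℕ)) (h : ∀ i j, E n (Equiv.swap i j) ∈ H)
    (k : Fin n) (hk : F n (Pi.mulSingle k fl) ∈ H) : W n ≤ H := by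
  have hE := all_E n H h
  refine W_le n H hE fun e => ?_
  change e ∈ H.comap (F n)
  apply Subgroup.pi_mem_of_mulSingle_mem
  intro i
  change F n _ ∈ H
  rcases perm_bool (e i) with h' | h'
  · rw [h']; simp [H.one_mem]
  · rw [h']
    convert conj_F n H hE _ hk (Equiv.swap i k) using 2
    ext j : 1
    by_cases hj : j = i
    · subst hj; simp
    · have : Equiv.swap i k j ≠ k := by
        intro h; apply hj
        exact (Equiv.swap i k).injective (h.trans (Equiv.swap_apply_left i k).symm)
      simp [hj, this]

/-- swap-relation is transitive -/
lemma swap_trans (n : ℕ) (K : Subgroup (Equiv.Perm (Fin n))) (a b c : Fin n)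
    (h1 : Equiv.swap a b ∈ K) (h2 : Equiv.swap b c ∈ K) : Equiv.swap a c ∈ K := by
  by_cases hab : a = b
  · subst hab; exact h2
  by_cases hac : a = c
  · subst hac; rw [Equiv.swap_self]; exact K.one_mem
  by_cases hbc : b = c
  · subst hbc; exact h1
  have := Equiv.swap_mul_swap_mul_swap (x := c) (y := b) (z := a) (Ne.symm hbc) (Ne.symm hac)
  rw [Equiv.swap_comm c b, Equiv.swap_comm b a] at this
  rw [← this]
  exact K.mul_mem (K.mul_mem h1 h2) h1

lemma swap_conj (n : ℕ) (K : Subgroup (Equiv.Perm (Fin n))) (a b : Fin n) (g) (hg : g ∈ K)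
    (h1 : Equiv.swap a b ∈ K) : Equiv.swap (g a) (g b) ∈ K := by
  rw [Equiv.swap_apply_apply]
  exact K.mul_mem (K.mul_mem hg h1) (K.inv_mem hg)

lemma Bgrp_eq (n : ℕ) (hn : 0 < n) : Bgrp n = W n := by
  have hsw : ∀ i (hi : i + 1 < n), β n (i + 1) = E n (Equiv.swap ⟨i, by omega⟩ ⟨i+1, hi⟩) := by
    intro i hi
    rw [E_swap]
    simp [β, add_assoc]
  have h0 : β n 0 = F n (Pi.mulSingle ⟨0, hn⟩ fl) := by
    rw [F_single]; simp [β]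
  apply le_antisymm
  · unfold Bgrp
    rw [Subgroup.closure_le]
    rintro _ ⟨i, hi, rfl⟩
    rcases i with _ | i
    · rw [h0]; exact F_mem_W _ _
    · rw [hsw _ hi]; exact E_mem_W _ _
  · refine W_le_of n _ ?_ ⟨0, hn⟩ (h0 ▸ Subgroup.subset_closure ⟨0, hn, rfl⟩)
    have key : ∀ k (hk : k < n), Equiv.swap ⟨0, hn⟩ ⟨k, hk⟩ ∈ (Bgrp n).comap (E n) := by
      intro k
      induction k with
      | zero => intro hk; rw [Equiv.swap_self]; exact Subgroup.one_mem _
      | succ k ih =>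
        intro hk
        refine swap_trans n _ _ _ _ (ih (by omega)) ?_
        change E n _ ∈ Bgrp n
        rw [← hsw]
        exact Subgroup.subset_closure ⟨k+1, hk, rfl⟩
    intro i j
    refine swap_trans n ((Bgrp n).comap (E n)) i ⟨0, hn⟩ j ?_ (key j.1 j.2)
    rw [Equiv.swap_comm]; exact key i.1 i.2


lemma pairs_prod (n o k : ℕ) (h : o + 2 * k ≤ n) : ∃ T : Equiv.Perm (Fin n),
    ((List.range k).map (fun i => Equiv.swap (o + 2 * i + 1) (o + 2 * i + 1 + 1) *
      Equiv.swap (n + (o + 2 * i) + 1) (n + (o + 2 * i + 1) + 1))).prod = E n T ∧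
    ∀ x, (T x).val = if x.val < o ∨ o + 2 * k ≤ x.val then x.val
      else if (x.val - o) % 2 = 0 then x.val + 1 else x.val - 1 := by
  induction k with
  | zero => exact ⟨1, by simp, fun x => by simp⟩
  | succ k ih =>
    obtain ⟨T, h1, h2⟩ := ih (by omega)
    refine ⟨T * Equiv.swap ⟨o + 2 * k, by omega⟩ ⟨o + 2 * k + 1, by omega⟩, ?_, ?_⟩
    · rw [List.range_succ, List.map_append, List.prod_append, h1, map_mul, E_swap]
      simp
    · intro x
      rw [Equiv.Perm.mul_apply, h2, Equiv.swap_apply_def]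
      simp only [Fin.ext_iff]
      by_cases hx1 : x.val = o + 2 * k
      · simp only [hx1, if_true]
        split_ifs <;> omega
      · by_cases hx2 : x.val = o + 2 * k + 1
        · simp only [hx2, if_true]
          split_ifs <;> simp at * <;> omega
        · simp only [hx1, hx2, if_false]
          split_ifs <;> omega

lemma flips_prod (n k : ℕ) (h : 2 + k ≤ n) :
    ((List.range k).map (fun j => Equiv.swap (2 + (j+1)) (n+2+(j+1)))).prod =
      F n (fun i => if 2 ≤ i.val ∧ i.val < 2 + k then fl else 1) := by
  induction k with
  | zero =>
    symm
    rw [List.range_zero, List.map_nil, List.prod_nil]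
    convert map_one (F n) using 2
    ext i : 1
    rw [if_neg (by omega)]; rfl
  | succ k ih =>
    rw [List.range_succ, List.map_append, List.prod_append, ih (by omega)]
    have := F_single n ⟨2 + k, by omega⟩
    simp only [List.map_cons, List.map_nil, List.prod_cons, List.prod_nil, mul_one]
    rw [show n + 2 + (k + 1) = n + (2 + k) + 1 by ring, show 2 + (k + 1) = 2 + k + 1 by ring, ← this, ← map_mul]
    congr 1
    ext i : 1
    simp only [Pi.mul_apply, Pi.mulSingle_apply, Fin.ext_iff]
    by_cases hi : i.val = 2 + k
    · rw [if_neg (by omega), if_pos hi, if_pos (by omega)]; simp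
    · rw [if_neg hi]
      by_cases h3 : 2 ≤ i.val ∧ i.val < 2 + k
      · rw [if_pos h3, if_pos (by omega)]; simp
      · rw [if_neg h3, if_neg (by omega)]; simp

lemma t1_eq (n : ℕ) (hn : 5 ≤ n) (hodd : Odd n) : ∃ T : Equiv.Perm (Fin n), t1 n = E n T ∧
    ∀ x, (T x).val = if x.val = n - 1 then x.val else if x.val % 2 = 0 then x.val + 1 else x.val - 1 := by
  obtain ⟨m, rfl⟩ := hodd
  obtain ⟨T, h1, h2⟩ := pairs_prod (2 * m + 1) 0 m (by omega)
  refine ⟨T, ?_, ?_⟩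
  · rw [← h1, t1, show (2 * m + 1 - 2) / 2 + 1 = m by omega]
    congr 2
    ext1 i
    congr 2 <;> omega
  · intro x
    rw [h2]
    have := x.2
    split_ifs <;> omega

lemma t2_eq (n : ℕ) (hn : 5 ≤ n) (hodd : Odd n) : ∃ T : Equiv.Perm (Fin n), t2 n = E n T ∧
    ∀ x, (T x).val = if x.val < 3 then x.val else if x.val % 2 = 1 then x.val + 1 else x.val - 1 := by
  obtain ⟨m, rfl⟩ := hodd
  obtain ⟨T, h1, h2⟩ := pairs_prod (2 * m + 1) 3 (m - 1) (by omega)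
  refine ⟨T, ?_, ?_⟩
  · rw [← h1, t2, show (2 * m + 1 - 3) / 2 = m - 1 by omega]
    congr 2
    ext1 i
    congr 2 <;> omega
  · intro x
    rw [h2]
    have := x.2
    split_ifs <;> omega

lemma t3_eq (n : ℕ) (hn : 5 ≤ n) : t3 n = E n (Equiv.swap ⟨0, by omega⟩ ⟨2, by omega⟩ *
    Equiv.swap ⟨1, by omega⟩ ⟨3, by omega⟩) := by
  rw [map_mul, E_swap, E_swap, t3]
  have : Equiv.swap 2 4 * Equiv.swap (n+1) (n+3) = Equiv.swap (n+1) (n+3) * Equiv.swap 2 4 := by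
    apply Equiv.Perm.Disjoint.commute
    apply Equiv.Perm.disjoint_swap_swap
    simp; omega
  rw [mul_assoc (Equiv.swap 1 3), this]
  simp [mul_assoc]

lemma t4_eq (n : ℕ) (hn : 5 ≤ n) : t4 n = E n (Equiv.swap ⟨0, by omega⟩ ⟨1, by omega⟩) *
    F n (fun i => if 2 ≤ i.val then fl else 1) := by
  rw [t4, flips_prod n (n - 2) (by omega), E_swap]
  congr 2
  ext1 i
  have := i.2
  congr 1
  simp; omega

/-- Value of the power orbit of `2`. -/
lemma orbit (n : ℕ) (hn : 5 ≤ n) (hodd : Odd n) (T1 T2 : Equiv.Perm (Fin n))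
    (h1 : ∀ x, (T1 x).val = if x.val = n - 1 then x.val else
      if x.val % 2 = 0 then x.val + 1 else x.val - 1)
    (h2 : ∀ x, (T2 x).val = if x.val < 3 then x.val else
      if x.val % 2 = 1 then x.val + 1 else x.val - 1) (k : ℕ) (hk : k ≤ n - 2) :
    (((T1 * T2) ^ k) ⟨2, by omega⟩).val =
      if 2 * k ≤ n - 3 then 2 + (2 * k - 1) else 2 + 2 * (n - 2 - k) := by
  obtain ⟨m, rfl⟩ := hodd
  induction k with
  | zero => simp
  | succ k ih =>
    have ih := ih (by omega)
    rw [pow_succ', Equiv.Perm.mul_apply, Equiv.Perm.mul_apply, h1, h2, ih]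
    split_ifs <;> omega

lemma pow_eq (n : ℕ) (hn : 5 ≤ n) (hodd : Odd n) (T1 T2 : Equiv.Perm (Fin n))
    (h1 : ∀ x, (T1 x).val = if x.val = n - 1 then x.val else
      if x.val % 2 = 0 then x.val + 1 else x.val - 1)
    (h2 : ∀ x, (T2 x).val = if x.val < 3 then x.val else
      if x.val % 2 = 1 then x.val + 1 else x.val - 1) :
    (∀ x : Fin n, 2 ≤ x.val → ∃ k, ((T1 * T2) ^ k) ⟨2, by omega⟩ = x) ∧
    (T1 * T2) ^ (n - 2) = Equiv.swap ⟨0, by omega⟩ ⟨1, by omega⟩ := by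
  have horb := orbit n hn hodd T1 T2 h1 h2
  have hsurj : ∀ x : Fin n, 2 ≤ x.val → ∃ k, ((T1 * T2) ^ k) ⟨2, by omega⟩ = x := by
    intro x hx
    have hx2 := x.2
    obtain ⟨m, rfl⟩ := hodd
    by_cases hp : x.val % 2 = 0
    · refine ⟨2 * m + 1 - 2 - (x.val - 2) / 2, Fin.ext ?_⟩
      rw [horb _ (by omega)]
      split_ifs <;> omega
    · refine ⟨(x.val - 1) / 2, Fin.ext ?_⟩
      rw [horb _ (by omega)]
      split_ifs <;> omega
  refine ⟨hsurj, ?_⟩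
  have h01 : (T1 * T2) ⟨0, by omega⟩ = ⟨1, by omega⟩ := by
    apply Fin.ext
    rw [Equiv.Perm.mul_apply, h1, h2]
    simp; omega
  have h10 : (T1 * T2) ⟨1, by omega⟩ = ⟨0, by omega⟩ := by
    apply Fin.ext
    rw [Equiv.Perm.mul_apply, h1, h2]
    simp; omega
  have hpar : ∀ k, ((T1 * T2) ^ (2 * k + 1)) ⟨0, by omega⟩ = ⟨1, by omega⟩ ∧
      ((T1 * T2) ^ (2 * k + 1)) ⟨1, by omega⟩ = ⟨0, by omega⟩ := by
    intro k
    induction k with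
    | zero => simpa using ⟨h01, h10⟩
    | succ k ih =>
      rw [show 2 * (k + 1) + 1 = (2 * k + 1) + 1 + 1 by ring, pow_succ, pow_succ]
      constructor
      · rw [Equiv.Perm.mul_apply, Equiv.Perm.mul_apply, h01, h10, ih.1]
      · rw [Equiv.Perm.mul_apply, Equiv.Perm.mul_apply, h10, h01, ih.2]
  have hm : ∃ k, n - 2 = 2 * k + 1 := by
    obtain ⟨m, rfl⟩ := hodd
    exact ⟨m - 1, by omega⟩
  obtain ⟨k0, hk0⟩ := hm
  have hp := hpar k0
  rw [← hk0] at hp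
  have hfix : ((T1 * T2) ^ (n - 2)) ⟨2, by omega⟩ = ⟨2, by omega⟩ := by
    apply Fin.ext
    rw [horb _ le_rfl]
    split_ifs <;> simp <;> omega
  apply Equiv.ext
  intro x
  by_cases hx0 : x = ⟨0, by omega⟩
  · rw [hx0, hp.1, Equiv.swap_apply_left]
  by_cases hx1 : x = ⟨1, by omega⟩
  · rw [hx1, hp.2, Equiv.swap_apply_right]
  rw [Equiv.swap_apply_of_ne_of_ne hx0 hx1]
  rw [Fin.ext_iff] at hx0 hx1
  simp only at hx0 hx1
  obtain ⟨k, hk⟩ := hsurj x (by omega)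
  rw [← hk, ← Equiv.Perm.mul_apply, ← pow_add, add_comm, pow_add, Equiv.Perm.mul_apply, hfix]

lemma G_eq (n : ℕ) (hn : 5 ≤ n) (hodd : Odd n) :
    Subgroup.closure {t1 n, t2 n, t3 n, t4 n} = W n := by
  obtain ⟨T1, e1, h1⟩ := t1_eq n hn hodd
  obtain ⟨T2, e2, h2⟩ := t2_eq n hn hodd
  have e3 := t3_eq n hn
  have e4 := t4_eq n hn
  obtain ⟨hsurj, hpow⟩ := pow_eq n hn hodd T1 T2 h1 h2
  apply le_antisymm
  · rw [Subgroup.closure_le]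
    rintro x (rfl | rfl | rfl | rfl)
    · rw [e1]; exact E_mem_W _ _
    · rw [e2]; exact E_mem_W _ _
    · rw [e3]; exact E_mem_W _ _
    · rw [e4]; exact (W n).mul_mem (E_mem_W _ _) (F_mem_W _ _)
  set H := Subgroup.closure {t1 n, t2 n, t3 n, t4 n} with hH
  set K := H.comap (E n) with hK
  have m1 : T1 ∈ K := by
    change E n T1 ∈ H
    rw [← e1]; exact Subgroup.subset_closure (by simp)
  have m2 : T2 ∈ K := by
    change E n T2 ∈ H
    rw [← e2]; exact Subgroup.subset_closure (by simp)
  have m3 : Equiv.swap ⟨0, by omega⟩ ⟨2, by omega⟩ *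
    Equiv.swap ⟨1, by omega⟩ ⟨3, by omega⟩ ∈ K := by
    change E n _ ∈ H
    rw [← e3]; exact Subgroup.subset_closure (by simp)
  have m4 : t4 n ∈ H := Subgroup.subset_closure (by simp)
  have mu : T1 * T2 ∈ K := K.mul_mem m1 m2
  have s01 : Equiv.swap ⟨0, by omega⟩ ⟨1, by omega⟩ ∈ K := by
    rw [← hpow]; exact K.pow_mem mu _
  have s23 : Equiv.swap ⟨2, by omega⟩ ⟨3, by omega⟩ ∈ K := by
    have := swap_conj n K _ _ _ m3 s01
    simpa [Equiv.swap_apply_def] using this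
  have u2 : (T1 * T2) ⟨2, by omega⟩ = ⟨3, by omega⟩ := by
    apply Fin.ext
    rw [Equiv.Perm.mul_apply, h1, h2]
    simp; omega
  have s2k : ∀ k, Equiv.swap ⟨2, by omega⟩ (((T1 * T2) ^ k) ⟨2, by omega⟩) ∈ K := by
    intro k
    induction k with
    | zero => rw [pow_zero, Equiv.Perm.one_apply, Equiv.swap_self]; exact K.one_mem
    | succ k ih =>
      refine swap_trans n K _ _ _ ih ?_
      rw [pow_succ, Equiv.Perm.mul_apply, u2]
      exact swap_conj n K _ _ _ (K.pow_mem mu k) s23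
  have s2x : ∀ x : Fin n, 2 ≤ x.val → Equiv.swap ⟨2, by omega⟩ x ∈ K := by
    intro x hx
    obtain ⟨k, rfl⟩ := hsurj x hx
    exact s2k k
  have s14 : Equiv.swap ⟨4, by omega⟩ ⟨1, by omega⟩ ∈ K := by
    have h34 : Equiv.swap ⟨4, by omega⟩ ⟨3, by omega⟩ ∈ K :=
      swap_trans n K _ ⟨2, by omega⟩ _ (by rw [Equiv.swap_comm]; exact s2x _ (by simp)) s23
    have := swap_conj n K _ _ _ m3 h34
    simpa [Equiv.swap_apply_def] using this
  have s21 : Equiv.swap ⟨2, by omega⟩ ⟨1, by omega⟩ ∈ K :=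
    swap_trans n K _ _ _ (s2x _ (by simp)) s14
  have sall : ∀ x : Fin n, Equiv.swap ⟨2, by omega⟩ x ∈ K := by
    intro x
    by_cases hx : 2 ≤ x.val
    · exact s2x x hx
    by_cases hx1 : x = ⟨1, by omega⟩
    · rw [hx1]; exact s21
    have hx0 : x = ⟨0, by omega⟩ := by
      apply Fin.ext
      rw [Fin.ext_iff] at hx1
      simp only at hx1 ⊢; omega
    rw [hx0]
    exact swap_trans n K _ _ _ s21 (by rw [Equiv.swap_comm]; exact s01)
  have sw : ∀ i j : Fin n, E n (Equiv.swap i j) ∈ H := by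
    intro i j
    exact swap_trans n K i ⟨2, by omega⟩ j (by rw [Equiv.swap_comm]; exact sall i) (sall j)
  have hE := all_E n H sw
  have f2 : F n (fun i => if 2 ≤ i.val then fl else 1) ∈ H := by
    rw [e4] at m4
    exact (H.mul_mem_cancel_left (hE _)).1 m4
  have flfl : fl * fl = 1 := by decide
  have pair12 : F n (Pi.mulSingle ⟨1, by omega⟩ fl * Pi.mulSingle ⟨2, by omega⟩ fl) ∈ H := by
    have := H.mul_mem f2 (conj_F n H hE _ f2 (Equiv.swap ⟨1, by omega⟩ ⟨2, by omega⟩))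
    rw [← map_mul] at this
    convert this using 2
    ext1 i
    simp only [Pi.mul_apply, Pi.mulSingle_apply, Equiv.swap_apply_def, Fin.ext_iff]
    by_cases hi1 : i.val = 1
    · simp [hi1]
    by_cases hi2 : i.val = 2
    · simp [hi2]
    simp only [hi1, hi2, if_false]
    split_ifs <;> simp [flfl]
  have pair : ∀ a (ha : a + 1 < n), 2 ≤ a →
      F n (Pi.mulSingle ⟨a, by omega⟩ fl * Pi.mulSingle ⟨a + 1, ha⟩ fl) ∈ H := by
    intro a ha ha2
    obtain ⟨σ, hσ1, hσ2⟩ : ∃ σ : Equiv.Perm (Fin n), σ ⟨a, by omega⟩ = ⟨1, by omega⟩ ∧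
        σ ⟨a + 1, ha⟩ = ⟨2, by omega⟩ := by
      refine ⟨Equiv.swap ⟨2, by omega⟩ ⟨a + 1, ha⟩ *
        Equiv.swap ⟨1, by omega⟩ ⟨a, by omega⟩, ?_, ?_⟩
      · rw [Equiv.Perm.mul_apply, Equiv.swap_apply_right, Equiv.swap_apply_of_ne_of_ne]
        · simp
        · rw [Ne, Fin.ext_iff]; simp only; omega
      · rw [Equiv.Perm.mul_apply, Equiv.swap_apply_of_ne_of_ne (x := (⟨a + 1, ha⟩ : Fin n)), Equiv.swap_apply_right]
        · rw [Ne, Fin.ext_iff]; simp only; omega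
        · rw [Ne, Fin.ext_iff]; simp only; omega
    have := conj_F n H hE _ pair12 σ
    convert this using 2
    ext1 i
    simp only [Pi.mul_apply, Pi.mulSingle_apply]
    simp only [← hσ1, ← hσ2, σ.injective.eq_iff]
  have tail : ∀ k, 2 + 2 * k < n → F n (fun i => if 2 + 2 * k ≤ i.val then fl else 1) ∈ H := by
    intro k
    induction k with
    | zero => intro _; exact f2
    | succ k ih =>
      intro hk
      have := H.mul_mem (ih (by omega)) (pair (2 + 2 * k) (by omega) (by omega))
      rw [← map_mul] at this
      convert this using 2
      ext1 i
      simp only [Pi.mul_apply, Pi.mulSingle_apply, Fin.ext_iff]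
      split_ifs <;> first | omega | simp [flfl]
  refine W_le_of n H sw ⟨n - 1, by omega⟩ ?_
  obtain ⟨m, rfl⟩ := hodd
  convert tail (m - 1) (by omega) using 2
  ext1 i
  have := i.2
  simp only [Pi.mulSingle_apply, Fin.ext_iff]
  split_ifs <;> first | omega | rfl

end BnProof

/-- For odd `n ≥ 5`, `G = ⟨t₁,t₂,t₃,t₄⟩` is isomorphic to the Coxeter group of
type `Bₙ` (realized as `⟨β₀,…,β_{n-1}⟩ ≤ Sym(2n)`), i.e. to the hyperoctahedral
group of order `2ⁿ·n!`. -/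
theorem G_iso_Bn (n : ℕ) (hn : 5 ≤ n) (hodd : Odd n) :
    Nonempty ((Subgroup.closure {t1 n, t2 n, t3 n, t4 n} : Subgroup (Equiv.Perm ℕ)) ≃*
      Bgrp n) ∧
    Nat.card (Subgroup.closure {t1 n, t2 n, t3 n, t4 n} : Subgroup (Equiv.Perm ℕ)) =
      2 ^ n * Nat.factorial n := by
  rw [BnProof.G_eq n hn hodd, BnProof.Bgrp_eq n (by omega)]
  exact ⟨⟨MulEquiv.refl _⟩, BnProof.card_W n⟩
end

section
/- Let n ≥ 8 and m = n−4, with t₁,...,t_m ∈ Sym(2n) as defined (t₁ = (2,3)(n+2,n+3)(4,5)(n+4,n+5)∏_{i=6}^{n}(i,n+i), t₂ = (1,2)(n+1,n+2)(3,4)(n+3,n+4)(5,6)(n+5,n+6)∏_{i=7}^{n}(i,n+i), t₃ = (2,3)(n+2,n+3)(6,7)(n+6,n+7), t_k = (k+3,k+4)(n+k+3,n+k+4) for 4 ≤ k ≤ m). Then (t₁t₂⋯t_m t₃t₄)ⁿ = ∏_{i=1}^{n}(i, n+i). -/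
open Equiv

/-- The generators `t₁, …, t_m` (`m = n − 4`) of the second family, as
permutations of `ℕ` (elements of `Sym(2n)` on `{1,…,2n}`):
`t₁ = (2,3)(n+2,n+3)(4,5)(n+4,n+5)∏_{i=6}^{n}(i,n+i)`,
`t₂ = (1,2)(n+1,n+2)(3,4)(n+3,n+4)(5,6)(n+5,n+6)∏_{i=7}^{n}(i,n+i)`,
`t₃ = (2,3)(n+2,n+3)(6,7)(n+6,n+7)`, and
`t_k = (k+3,k+4)(n+k+3,n+k+4)` for `k ≥ 4`. -/
def t (n k : ℕ) : Equiv.Perm ℕ :=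
  if k = 1 then
    Equiv.swap 2 3 * Equiv.swap (n+2) (n+3) * Equiv.swap 4 5 * Equiv.swap (n+4) (n+5) *
      ((List.range (n - 5)).map (fun j => Equiv.swap (6 + j) (n+6+j))).prod
  else if k = 2 then
    Equiv.swap 1 2 * Equiv.swap (n+1) (n+2) * Equiv.swap 3 4 * Equiv.swap (n+3) (n+4) *
      Equiv.swap 5 6 * Equiv.swap (n+5) (n+6) *
      ((List.range (n - 6)).map (fun j => Equiv.swap (7 + j) (n+7+j))).prod
  else if k = 3 then
    Equiv.swap 2 3 * Equiv.swap (n+2) (n+3) * Equiv.swap 6 7 * Equiv.swap (n+6) (n+7)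
  else
    Equiv.swap (k+3) (k+4) * Equiv.swap (n+k+3) (n+k+4)

/-- The product `t₁t₂⋯t_k` of the first `k` generators in increasing order. -/
def tProd (n k : ℕ) : Equiv.Perm ℕ :=
  ((List.range k).map (fun i => t n (i+1))).prod

/-- `∏_{i=1}^{k}(i, n+i)`. -/
def bigSwap (n k : ℕ) : Equiv.Perm ℕ :=
  ((List.range k).map (fun i => Equiv.swap (i+1) (n+(i+1)))).prod

lemma prodSwap_apply (n a r x : ℕ) (hr : r ≤ n) :
    ((List.range r).map (fun j => Equiv.swap (a + j) (n + a + j))).prod x =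
      if a ≤ x ∧ x < a + r then x + n
      else if n + a ≤ x ∧ x < n + a + r then x - n else x := by
  induction r generalizing x with
  | zero => simp only [List.range_zero, List.map_nil, List.prod_nil, Equiv.Perm.one_apply]; split_ifs <;> omega
  | succ r ih =>
    rw [List.range_succ, List.map_append, List.prod_append]
    simp only [List.map_cons, List.map_nil, List.prod_cons, List.prod_nil, mul_one,
      Equiv.Perm.mul_apply]
    rw [ih _ (by omega), Equiv.swap_apply_def]
    split_ifs <;> omega

lemma bigSwap_apply (n x : ℕ) :
    bigSwap n n x = if 1 ≤ x ∧ x ≤ n then x + n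
      else if n + 1 ≤ x ∧ x ≤ n + n then x - n else x := by
  have h := prodSwap_apply n 1 n x le_rfl
  have e : bigSwap n n = ((List.range n).map (fun j => Equiv.swap (1 + j) (n + 1 + j))).prod := by
    unfold bigSwap
    congr 2
    funext i
    congr 1 <;> omega
  rw [e, h]
  split_ifs <;> omega

/-- The tail `t₄ ⋯ t_{r+3}`. -/
def tailProd (n r : ℕ) : Equiv.Perm ℕ :=
  ((List.range r).map (fun i => t n (i+4))).prod

lemma tailProd_apply (n r x : ℕ) (hr : r + 7 ≤ n) :
    tailProd n r x = if x = 7 + r then 7 else if 7 ≤ x ∧ x < 7 + r then x + 1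
      else if x = n + 7 + r then n + 7 else if n + 7 ≤ x ∧ x < n + 7 + r then x + 1 else x := by
  induction r generalizing x with
  | zero => simp [tailProd]; split_ifs <;> omega
  | succ r ih =>
    have e : tailProd n (r+1) = tailProd n r * t n (r+4) := by
      simp [tailProd, List.range_succ]
    have e2 : t n (r+4) = Equiv.swap (r+7) (r+8) * Equiv.swap (n+r+7) (n+r+8) := by
      unfold t
      rw [if_neg (by omega), if_neg (by omega), if_neg (by omega)]
      congr 2
    rw [e, e2, Equiv.Perm.mul_apply, Equiv.Perm.mul_apply, ih _ (by omega)]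
    rcases (by omega : x = r + 7 ∨ x = r + 8 ∨ x = n + r + 7 ∨ x = n + r + 8 ∨
      (x ≠ r + 7 ∧ x ≠ r + 8 ∧ x ≠ n + r + 7 ∧ x ≠ n + r + 8)) with h | h | h | h | h <;>
      simp (disch := omega) only [Equiv.swap_apply_def, if_pos, if_neg] <;>
      (try split_ifs) <;> omega

lemma tProd_split (n r : ℕ) : tProd n (r+3) = t n 1 * t n 2 * t n 3 * tailProd n r := by
  unfold tProd tailProd
  rw [show r + 3 = 3 + r by omega, List.range_add]
  simp [List.range_succ, Function.comp_def, mul_assoc]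
  congr 5
  funext i
  congr 1
  omega

/-- Explicit description of the permutation. -/
def F (n x : ℕ) : ℕ :=
  if x = 0 ∨ 2 * n < x then x
  else if x = 5 then n + 6 else if x = n + 5 then 6
  else if x = 1 ∨ x = n + 1 ∨ x = 3 ∨ x = n + 3 ∨ x = 6 ∨ x = n + 6 then x + 2
  else if x = 4 ∨ x = n + 4 then x - 2
  else if x = 2 ∨ x = n + 2 ∨ x = 8 ∨ x = n + 8 then x - 1
  else if x = n ∨ (x = 7 ∧ n = 8) then 4
  else if x = 2 * n ∨ (x = n + 7 ∧ n = 8) then n + 4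
  else if x = 7 ∨ x = n + 7 then x + 2
  else x + 1

/-- Explicit `t₁`. -/
def T1 (n x : ℕ) : ℕ :=
  if x = 2 ∨ x = n + 2 ∨ x = 4 ∨ x = n + 4 then x + 1
  else if x = 3 ∨ x = n + 3 ∨ x = 5 ∨ x = n + 5 then x - 1
  else if 6 ≤ x ∧ x ≤ n then x + n
  else if n + 6 ≤ x ∧ x ≤ n + n then x - n else x

/-- Explicit `t₂`. -/
def T2 (n x : ℕ) : ℕ :=
  if x = 1 ∨ x = n + 1 ∨ x = 3 ∨ x = n + 3 ∨ x = 5 ∨ x = n + 5 then x + 1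
  else if x = 2 ∨ x = n + 2 ∨ x = 4 ∨ x = n + 4 ∨ x = 6 ∨ x = n + 6 then x - 1
  else if 7 ≤ x ∧ x ≤ n then x + n
  else if n + 7 ≤ x ∧ x ≤ n + n then x - n else x

/-- Explicit `t₃`. -/
def T3 (n x : ℕ) : ℕ :=
  if x = 2 ∨ x = n + 2 ∨ x = 6 ∨ x = n + 6 then x + 1
  else if x = 3 ∨ x = n + 3 ∨ x = 7 ∨ x = n + 7 then x - 1 else x

/-- Explicit `t₄`. -/
def T4 (n x : ℕ) : ℕ :=
  if x = 7 ∨ x = n + 7 then x + 1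
  else if x = 8 ∨ x = n + 8 then x - 1 else x

/-- Explicit tail product. -/
def T5 (n x : ℕ) : ℕ :=
  if x = n then 7 else if x = n + n then n + 7
  else if (7 ≤ x ∧ x < n) ∨ (n + 7 ≤ x ∧ x < n + n) then x + 1 else x

lemma pairSwap (n a x : ℕ) (hn : 8 ≤ n) :
    Equiv.swap a (a+1) (Equiv.swap (n+a) (n+(a+1)) x) =
      if x = a ∨ x = n + a then x + 1 else if x = a + 1 ∨ x = n + (a + 1) then x - 1 else x := by
  simp only [Equiv.swap_apply_def]
  grind

lemma t1_apply_s12 (n x : ℕ) (hn : 8 ≤ n) : t n 1 x = T1 n x := by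
  simp only [t, if_true, Equiv.Perm.mul_apply]
  rw [prodSwap_apply _ _ _ _ (by omega)]
  generalize h1 : (if 6 ≤ x ∧ x < 6 + (n - 5) then x + n
      else if n + 6 ≤ x ∧ x < n + 6 + (n - 5) then x - n else x) = a
  generalize h2 : Equiv.swap 4 5 (Equiv.swap (n+4) (n+5) a) = b
  generalize h3 : Equiv.swap 2 3 (Equiv.swap (n+2) (n+3) b) = c
  rw [pairSwap n 4 a hn] at h2
  rw [pairSwap n 2 b hn] at h3
  unfold T1
  grind

lemma t2_apply_s12 (n x : ℕ) (hn : 8 ≤ n) : t n 2 x = T2 n x := by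
  rw [t, if_neg (by decide), if_pos rfl]
  simp only [Equiv.Perm.mul_apply]
  rw [prodSwap_apply _ _ _ _ (by omega)]
  generalize h1 : (if 7 ≤ x ∧ x < 7 + (n - 6) then x + n
      else if n + 7 ≤ x ∧ x < n + 7 + (n - 6) then x - n else x) = a
  generalize h2 : Equiv.swap 5 6 (Equiv.swap (n+5) (n+6) a) = b
  generalize h3 : Equiv.swap 3 4 (Equiv.swap (n+3) (n+4) b) = c
  generalize h4 : Equiv.swap 1 2 (Equiv.swap (n+1) (n+2) c) = d
  rw [pairSwap n 5 a hn] at h2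
  rw [pairSwap n 3 b hn] at h3
  rw [pairSwap n 1 c hn] at h4
  unfold T2
  grind (splits := 40)

lemma t3_apply_s12 (n x : ℕ) (hn : 8 ≤ n) : t n 3 x = T3 n x := by
  rw [t, if_neg (by decide), if_neg (by decide), if_pos rfl]
  simp only [Equiv.Perm.mul_apply]
  generalize h2 : Equiv.swap 6 7 (Equiv.swap (n+6) (n+7) x) = b
  generalize h3 : Equiv.swap 2 3 (Equiv.swap (n+2) (n+3) b) = c
  rw [pairSwap n 6 x hn] at h2
  rw [pairSwap n 2 b hn] at h3
  unfold T3
  grind (splits := 40)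

lemma t4_apply (n x : ℕ) (hn : 8 ≤ n) : t n 4 x = T4 n x := by
  rw [t, if_neg (by decide), if_neg (by decide), if_neg (by decide)]
  simp only [Equiv.Perm.mul_apply]
  exact pairSwap n 7 x hn

lemma t5_apply (n x : ℕ) (hn : 8 ≤ n) : tailProd n (n-7) x = T5 n x := by
  rw [tailProd_apply _ _ _ (by omega), T5]
  grind (splits := 40)

/-- Explicit `t₃t₄`. -/
def T34 (n x : ℕ) : ℕ :=
  if x = 2 ∨ x = n + 2 ∨ x = 6 ∨ x = n + 6 ∨ x = 7 ∨ x = n + 7 then x + 1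
  else if x = 3 ∨ x = n + 3 then x - 1
  else if x = 8 ∨ x = n + 8 then x - 2 else x

/-- Explicit `t₁t₂`. -/
def T12 (n x : ℕ) : ℕ :=
  if x = 5 then n + 6 else if x = n + 5 then 6
  else if x = 1 ∨ x = n + 1 ∨ x = 3 ∨ x = n + 3 then x + 2
  else if x = 2 ∨ x = n + 2 then x - 1
  else if x = 4 ∨ x = n + 4 ∨ x = 6 ∨ x = n + 6 then x - 2 else x

lemma T34_eq (n x : ℕ) (hn : 8 ≤ n) : T3 n (T4 n x) = T34 n x := by
  generalize h4 : T4 n x = a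
  unfold T4 at h4
  unfold T3 T34
  grind (splits := 40)

lemma T12_eq (n x : ℕ) (hn : 8 ≤ n) : T1 n (T2 n x) = T12 n x := by
  generalize h4 : T2 n x = a
  unfold T2 at h4
  unfold T1 T12
  grind (splits := 40)

/-- Explicit `t₁t₂t₃`. -/
def T123 (n x : ℕ) : ℕ :=
  if x = 5 then n + 6 else if x = n + 5 then 6
  else if x = 1 ∨ x = n + 1 then x + 2
  else if x = 2 ∨ x = n + 2 then x + 3
  else if x = 3 ∨ x = n + 3 ∨ x = 4 ∨ x = n + 4 then x - 2
  else if x = 6 ∨ x = n + 6 then x + 1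
  else if x = 7 ∨ x = n + 7 then x - 3 else x

lemma T123_eq (n x : ℕ) (hn : 8 ≤ n) : T12 n (T3 n x) = T123 n x := by
  generalize h4 : T3 n x = a
  unfold T3 at h4
  unfold T12 T123
  grind (splits := 40)

lemma explicit (n x : ℕ) (hn : 8 ≤ n) :
    T1 n (T2 n (T3 n (T5 n (T3 n (T4 n x))))) = F n x := by
  rw [T12_eq n _ hn, T123_eq n _ hn, T34_eq n _ hn]
  generalize h1 : T34 n x = a
  unfold T34 at h1
  generalize h2 : T5 n a = b
  have h3 : (x = 0 ∨ 2 * n < x) ∨ (1 ≤ x ∧ x ≤ n) ∨ (n + 1 ≤ x ∧ x ≤ 2 * n) := by omega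
  unfold T5 at h2
  unfold T123 F
  rcases h3 with h3 | h3 | h3
  · grind (splits := 40)
  · grind (splits := 40)
  · grind (splits := 40)

lemma f_apply (n x : ℕ) (hn : 8 ≤ n) :
    (tProd n (n-4) * t n 3 * t n 4) x = F n x := by
  rw [show n - 4 = (n - 7) + 3 by omega, tProd_split]
  simp only [Equiv.Perm.mul_apply]
  rw [t4_apply n _ hn, t3_apply_s12 n _ hn, t5_apply n _ hn, t3_apply_s12 n _ hn, t2_apply_s12 n _ hn,
    t1_apply_s12 n _ hn, explicit n x hn]

/-- The flip. -/
def H (n x : ℕ) : ℕ :=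
  if 1 ≤ x ∧ x ≤ n then x + n else if n + 1 ≤ x ∧ x ≤ n + n then x - n else x

lemma H_H (n x : ℕ) : H n (H n x) = x := by
  unfold H; split_ifs <;> omega

lemma F_H (n x : ℕ) (hn : 8 ≤ n) : F n (H n x) = H n (F n x) := by
  generalize h1 : H n x = y
  generalize h2 : F n x = z
  generalize h3 : F n y = u
  generalize h4 : H n z = v
  unfold H at h1 h4
  unfold F at h2 h3
  grind (splits := 40)

/-- The orbit of 1. -/
def orb (n j : ℕ) : ℕ :=
  if j = 0 then 1 else if j = 1 then 3 else if j = 2 then 5 else if j = n - 1 then n + 2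
  else if j = n - 2 then n + 4 else if j = 3 then n + 6 else if j = 4 then n + 8
  else if j = 5 then n + 7 else n + j + 3

lemma orb_succ (n j : ℕ) (hn : 8 ≤ n) (hj : j + 1 < n) : F n (orb n j) = orb n (j+1) := by
  generalize h1 : orb n j = y
  generalize h2 : orb n (j+1) = z
  generalize h3 : F n y = u
  unfold orb at h1 h2
  unfold F at h3
  grind (splits := 40)

lemma orb_last (n : ℕ) (hn : 8 ≤ n) : F n (orb n (n-1)) = H n (orb n 0) := by
  have h0 : orb n 0 = 1 := by simp [orb]
  have h1 : orb n (n-1) = n + 2 := by unfold orb; grind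
  rw [h0, h1]
  unfold F H
  grind (splits := 40)

lemma orb_surj (n x : ℕ) (hn : 8 ≤ n) (h1 : 1 ≤ x) (h2 : x ≤ n) :
    ∃ j < n, orb n j = x ∨ H n (orb n j) = x := by
  rcases (by omega : x = 1 ∨ x = 3 ∨ x = 5 ∨ x = 2 ∨ x = 4 ∨ x = 6 ∨ x = 8 ∨ x = 7 ∨ 9 ≤ x) with
    h | h | h | h | h | h | h | h | h
  · exact ⟨0, by omega, Or.inl (by unfold orb; grind (splits := 40))⟩
  · exact ⟨1, by omega, Or.inl (by unfold orb; grind (splits := 40))⟩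
  · exact ⟨2, by omega, Or.inl (by unfold orb; grind (splits := 40))⟩
  · exact ⟨n-1, by omega, Or.inr (by unfold orb H; grind (splits := 40))⟩
  · exact ⟨n-2, by omega, Or.inr (by unfold orb H; grind (splits := 40))⟩
  · exact ⟨3, by omega, Or.inr (by unfold orb H; grind (splits := 40))⟩
  · exact ⟨4, by omega, Or.inr (by unfold orb H; grind (splits := 40))⟩
  · exact ⟨5, by omega, Or.inr (by unfold orb H; grind (splits := 40))⟩
  · exact ⟨x-3, by omega, Or.inr (by unfold orb H; grind (splits := 40))⟩

lemma iter_H (n k x : ℕ) (hn : 8 ≤ n) : (F n)^[k] (H n x) = H n ((F n)^[k] x) :=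
  (Function.Commute.iterate_left (f := F n) (g := H n) (fun y => F_H n y hn) k) x

lemma iter_orb (n j : ℕ) (hn : 8 ≤ n) (hj : j < n) : (F n)^[j] 1 = orb n j := by
  induction j with
  | zero => simp [orb]
  | succ j ih => rw [Function.iterate_succ_apply', ih (by omega), orb_succ n j hn hj]

lemma iter_one (n : ℕ) (hn : 8 ≤ n) : (F n)^[n] 1 = H n 1 := by
  have h := orb_last n hn
  rw [← iter_orb n (n-1) hn (by omega), ← Function.iterate_succ_apply' (F n),
    show (n-1).succ = n by omega] at h
  simpa [orb] using h

lemma iter_orb' (n j : ℕ) (hn : 8 ≤ n) (hj : j < n) :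
    (F n)^[n] (orb n j) = H n (orb n j) := by
  rw [← iter_orb n j hn hj, ← Function.iterate_add_apply, Nat.add_comm,
    Function.iterate_add_apply, iter_one n hn, iter_H n _ _ hn]

lemma iter_low (n x : ℕ) (hn : 8 ≤ n) (h1 : 1 ≤ x) (h2 : x ≤ n) : (F n)^[n] x = H n x := by
  obtain ⟨j, hj, h | h⟩ := orb_surj n x hn h1 h2
  · rw [← h, iter_orb' n j hn hj]
  · rw [← h, iter_H n _ _ hn, iter_orb' n j hn hj]

lemma iter_all (n x : ℕ) (hn : 8 ≤ n) : (F n)^[n] x = H n x := by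
  by_cases h1 : 1 ≤ x ∧ x ≤ n
  · exact iter_low n x hn h1.1 h1.2
  · by_cases h2 : n + 1 ≤ x ∧ x ≤ n + n
    · have h3 : H n (x - n) = x := by
        unfold H; rw [if_pos (by omega)]; omega
      rw [← h3, iter_H n _ _ hn, iter_low n (x-n) hn (by omega) (by omega)]
    · have h3 : H n x = x := by unfold H; rw [if_neg h1, if_neg h2]
      have h4 : F n x = x := by unfold F; rw [if_pos (by omega)]
      rw [h3]
      exact Function.iterate_fixed h4 n

/-- `(t₁t₂⋯t_m t₃t₄)ⁿ = ∏_{i=1}^{n}(i, n+i)` for `n ≥ 8`, `m = n − 4`. -/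
theorem pow_n_eq (n : ℕ) (hn : 8 ≤ n) (m : ℕ) (hm : m = n - 4) :
    (tProd n m * t n 3 * t n 4) ^ n = bigSwap n n := by
  subst hm
  ext x
  have e : ⇑(tProd n (n-4) * t n 3 * t n 4) = F n := funext fun y => f_apply n y hn
  rw [← Equiv.Perm.iterate_eq_pow, e, iter_all n x hn, bigSwap_apply]
  rfl
end

section
/- Let n ≥ 8 and let t₂, t₃, t₄ ∈ Sym(2n) be defined by t₂ = (1,2)(n+1,n+2)(3,4)(n+3,n+4)(5,6)(n+5,n+6)∏_{i=7}^{n}(i,n+i), t₃ = (2,3)(n+2,n+3)(6,7)(n+6,n+7), t₄ = (7,8)(n+7,n+8). Then the subgroup H = ⟨t₂, t₃, t₄⟩ has order 2⁶·3 = 192; moreover ⟨(t₂t₃)³, (t₃t₄)³⟩ is a normal subgroup of H isomorphic to the dihedral group of order 8, and C_H(⟨(t₂t₃)³, (t₃t₄)³⟩) = ⟨(t₂t₃)², t₄⟩ ≅ ℤ₂ × Sym(4). -/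
open Equiv

namespace H234

abbrev M : Type := DihedralGroup 4 × Perm (Fin 4)
abbrev P : Type := Perm (Fin 4) × Perm Bool

/-- The reflection `(2,3)`. -/
def sP : P := (swap 1 2, 1)
/-- The reflection `(1,2)(3,4)` together with the sign change. -/
def tauP : P := (swap 0 1 * swap 2 3, swap false true)

def gFun : DihedralGroup 4 → P
  | .r i => (sP * tauP) ^ i.val
  | .sr i => sP * (sP * tauP) ^ i.val

set_option maxRecDepth 100000 in
theorem gFun_mul : ∀ a b : DihedralGroup 4, gFun (a * b) = gFun a * gFun b := by decide

set_option maxRecDepth 100000 in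
theorem gFun_inj : ∀ a b : DihedralGroup 4, gFun a = gFun b → a = b := by decide

abbrev X (n : ℕ) : Type := (Fin 4 × Bool) ⊕ ((Fin 4 × Bool) ⊕ (Fin (n - 8) × Bool))

def act (n : ℕ) (d : P) (s : Perm (Fin 4)) : Perm (X n) :=
  Equiv.sumCongr (Equiv.prodCongr d.1 (Equiv.refl _))
    (Equiv.sumCongr (Equiv.prodCongr s d.2) (Equiv.prodCongr (Equiv.refl _) d.2))

def actHom (n : ℕ) : M →* Perm (X n) where
  toFun m := act n (gFun m.1) m.2
  map_one' := by
    ext x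
    have : gFun 1 = 1 := by decide
    rcases x with ⟨i, b⟩ | ⟨i, b⟩ | ⟨i, b⟩ <;> simp [act, this]
  map_mul' a c := by
    ext x
    rcases x with ⟨i, b⟩ | ⟨i, b⟩ | ⟨i, b⟩ <;> simp [act, gFun_mul]

theorem actHom_inj (n : ℕ) : Function.Injective (actHom n) := by
  intro a c h
  have h1 : ∀ x, act n (gFun a.1) a.2 x = act n (gFun c.1) c.2 x := fun x =>
    congrArg (fun e : Perm (X n) => e x) h
  refine Prod.ext (gFun_inj _ _ (Prod.ext ?_ ?_)) ?_
  · ext i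
    have := h1 (Sum.inl (i, true))
    simp [act] at this
    rw [this]
  · ext b
    have := h1 (Sum.inr (Sum.inl (0, b)))
    simp [act] at this
    rw [this.2]
  · ext i
    have := h1 (Sum.inr (Sum.inl (i, true)))
    simp [act] at this
    rw [this.1]

def emb (n : ℕ) : X n → ℕ
  | .inl (i, b) => i.val + 1 + (if b then n else 0)
  | .inr (.inl (i, b)) => i.val + 5 + (if (b ^^ decide (i = 0)) then n else 0)
  | .inr (.inr (i, b)) => i.val + 9 + (if b then n else 0)

theorem emb_inj (n : ℕ) (hn : 8 ≤ n) : Function.Injective (emb n) := by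
  rintro (⟨i, b⟩ | ⟨i, b⟩ | ⟨i, b⟩) (⟨j, c⟩ | ⟨j, c⟩ | ⟨j, c⟩) h <;>
    have hi := i.isLt <;> have hj := j.isLt <;>
    cases b <;> cases c <;> simp [emb] at h ⊢ <;> (try rw [Fin.ext_iff]) <;>
    (try simp only [Fin.ext_iff, Fin.val_zero] at h) <;> (try split_ifs at h) <;> omega

def embE (n : ℕ) (hn : 8 ≤ n) : X n ↪ ℕ := ⟨emb n, emb_inj n hn⟩

noncomputable def f (n : ℕ) (hn : 8 ≤ n) : M →* Perm ℕ :=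
  (Equiv.Perm.viaEmbeddingHom (embE n hn)).comp (actHom n)

theorem f_inj (n : ℕ) (hn : 8 ≤ n) : Function.Injective (f n hn) :=
  (Equiv.Perm.viaEmbeddingHom_injective (embE n hn)).comp (actHom_inj n)

theorem mem_range_emb (n x : ℕ) (hn : 8 ≤ n) (h1 : 1 ≤ x) (h2 : x ≤ 2 * n) :
    ∃ a, emb n a = x := by
  have key : ∀ y, 1 ≤ y → y ≤ n → ∀ b : Bool, ∃ a, emb n a = y + (if b then n else 0) := by
    intro y hy1 hy2 b
    by_cases c1 : y ≤ 4
    · exact ⟨.inl (⟨y - 1, by omega⟩, b), by simp [emb]; omega⟩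
    by_cases c2 : y ≤ 8
    · refine ⟨.inr (.inl (⟨y - 5, by omega⟩, b ^^ decide (y = 5))), ?_⟩
      have : (decide ((⟨y - 5, by omega⟩ : Fin 4) = 0)) = decide (y = 5) := by
        simp only [Fin.ext_iff, decide_eq_decide]; simp; omega
      simp only [emb, this]
      simp
      omega
    · exact ⟨.inr (.inr (⟨y - 9, by omega⟩, b)), by simp [emb]; omega⟩
  by_cases hx : x ≤ n
  · simpa using key x h1 hx false
  · obtain ⟨a, ha⟩ := key (x - n) (by omega) (by omega) true
    exact ⟨a, by simp at ha; omega⟩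

theorem f_eq (n : ℕ) (hn : 8 ≤ n) (m : M) (p : Perm ℕ)
    (h : ∀ a, p (emb n a) = emb n (act n (gFun m.1) m.2 a))
    (h0 : p 0 = 0) (h1 : ∀ x, 2 * n < x → p x = x) : f n hn m = p := by
  ext x
  by_cases hx : x ∈ Set.range (embE n hn)
  · obtain ⟨a, rfl⟩ := hx
    have := Equiv.Perm.viaEmbedding_apply (actHom n m) (embE n hn) a
    exact this.trans (h a).symm
  · have := Equiv.Perm.viaEmbedding_apply_of_notMem (actHom n m) (embE n hn) x hx
    refine this.trans ?_
    rcases Nat.eq_zero_or_pos x with rfl | hp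
    · exact h0.symm
    · by_cases h2 : x ≤ 2 * n
      · exact absurd (mem_range_emb n x hn hp h2) hx
      · exact (h1 x (by omega)).symm

theorem prod_apply (n k x : ℕ) (hk : k ≤ n) :
    ((List.range k).map (fun j => Equiv.swap (7 + j) (n+7+j))).prod x =
      if 7 ≤ x ∧ x < 7 + k then x + n else
      if n + 7 ≤ x ∧ x < n + 7 + k then x - n else x := by
  induction k generalizing x with
  | zero => simp only [List.range_zero, List.map_nil, List.prod_nil, Perm.one_apply]; split_ifs <;> omega
  | succ k ih =>
    rw [List.range_succ, List.map_append, List.prod_append, Perm.mul_apply]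
    simp only [List.map_cons, List.map_nil, List.prod_cons, List.prod_nil, mul_one]
    rw [ih _ (by omega)]
    simp only [Equiv.swap_apply_def]
    split_ifs <;> omega

def m2 : M := (.sr 1, swap 0 1)
def m3 : M := (.sr 0, swap 1 2)
def m4 : M := (1, swap 2 3)

theorem gtau : gFun (.sr 1) = tauP := by decide
theorem gs : gFun (.sr 0) = sP := by decide
theorem g1 : gFun 1 = 1 := by decide

theorem f4 (n : ℕ) (hn : 8 ≤ n) : f n hn m4 = t n 4 := by
  apply f_eq
  · rintro (⟨i, b⟩ | ⟨i, b⟩ | ⟨i, b⟩)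
    · fin_cases i <;> cases b <;> simp [m4, g1, act, emb, t, Equiv.swap_apply_def] <;>
        split_ifs <;> omega
    · fin_cases i <;> cases b <;> simp [m4, g1, act, emb, t, Equiv.swap_apply_def] <;>
        split_ifs <;> omega
    · have := i.isLt
      cases b <;> simp [m4, g1, act, emb, t, Equiv.swap_apply_def] <;>
        split_ifs <;> omega
  · simp [t, Equiv.swap_apply_def]
  · intro x hx
    simp [t, Equiv.swap_apply_def]
    split_ifs <;> omega

/-- Two parallel adjacent transpositions. -/
theorem pair_spec (n a b a1 b1 x y : ℕ) (hb : b = n + a) (ha1 : a1 = a + 1) (hb1 : b1 = b + 1)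
    (hn : 2 ≤ n) (hy : swap a a1 (swap b b1 x) = y) :
    ((x = a ∨ x = b) ∧ y = x + 1) ∨ ((x = a1 ∨ x = b1) ∧ y + 1 = x) ∨
      (x ≠ a ∧ x ≠ a1 ∧ x ≠ b ∧ x ≠ b1 ∧ y = x) := by
  subst hy hb1 ha1 hb
  by_cases h1 : x = n + a
  · subst h1
    rw [swap_apply_left, swap_apply_of_ne_of_ne (by omega) (by omega)]
    omega
  by_cases h2 : x = n + a + 1
  · subst h2
    rw [swap_apply_right, swap_apply_of_ne_of_ne (by omega) (by omega)]
    omega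
  rw [swap_apply_of_ne_of_ne h1 h2, swap_apply_def]
  split_ifs <;> omega

theorem t3_apply (n x : ℕ) (hn : 8 ≤ n) : t n 3 x =
    if x = 2 ∨ x = 6 ∨ x = n + 2 ∨ x = n + 6 then x + 1 else
    if x = 3 ∨ x = 7 ∨ x = n + 3 ∨ x = n + 7 then x - 1 else x := by
  have e : t n 3 x = swap 2 3 (swap (n+2) (n+3) (swap 6 7 (swap (n+6) (n+7) x))) := by
    simp [t]
  rw [e]
  generalize h1 : swap 6 7 (swap (n+6) (n+7) x) = y
  generalize h2 : swap 2 3 (swap (n+2) (n+3) y) = z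
  have k1 := pair_spec n _ _ _ _ _ _ rfl rfl rfl (by omega) h1
  have k2 := pair_spec n _ _ _ _ _ _ rfl rfl rfl (by omega) h2
  split_ifs <;> omega

theorem f3 (n : ℕ) (hn : 8 ≤ n) : f n hn m3 = t n 3 := by
  apply f_eq
  · intro a
    rw [t3_apply n _ hn]
    rcases a with ⟨i, b⟩ | ⟨i, b⟩ | ⟨i, b⟩
    · fin_cases i <;> cases b <;>
        simp [m3, gs, sP, act, emb, Equiv.swap_apply_def] <;> (try split_ifs) <;> omega
    · fin_cases i <;> cases b <;>
        simp [m3, gs, sP, act, emb, Equiv.swap_apply_def] <;> (try split_ifs) <;> omega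
    · have := i.isLt
      cases b <;> simp [m3, gs, sP, act, emb] <;>
        (try split_ifs) <;> omega
  · rw [t3_apply n _ hn]; simp
  · intro x hx
    rw [t3_apply n _ hn]
    split_ifs <;> omega

/-- An explicit formula for `t₂`. -/
theorem t2_apply (n x : ℕ) (hn : 8 ≤ n) : t n 2 x =
    if x = 0 ∨ 2 * n < x then x else
    if x = 1 ∨ x = 3 ∨ x = 5 ∨ x = n + 1 ∨ x = n + 3 ∨ x = n + 5 then x + 1 else
    if x ≤ 6 ∨ n < x ∧ x ≤ n + 6 then x - 1 else
    if x ≤ n then x + n else x - n := by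
  have e : t n 2 x = swap 1 2 (swap (n+1) (n+2) (swap 3 4 (swap (n+3) (n+4)
      (swap 5 6 (swap (n+5) (n+6)
        (((List.range (n - 6)).map (fun j => Equiv.swap (7 + j) (n+7+j))).prod x)))))) := by
    simp [t]
  rw [e]
  generalize h0 : ((List.range (n - 6)).map (fun j => Equiv.swap (7 + j) (n+7+j))).prod x = w
  generalize h1 : swap 5 6 (swap (n+5) (n+6) w) = y
  generalize h2 : swap 3 4 (swap (n+3) (n+4) y) = z
  generalize h3 : swap 1 2 (swap (n+1) (n+2) z) = u
  rw [prod_apply n _ x (by omega)] at h0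
  have k1 := pair_spec n _ _ _ _ _ _ rfl rfl rfl (by omega) h1
  have k2 := pair_spec n _ _ _ _ _ _ rfl rfl rfl (by omega) h2
  have k3 := pair_spec n _ _ _ _ _ _ rfl rfl rfl (by omega) h3
  clear h1 h2 h3 e
  have k0 : (7 ≤ w ∧ w ≤ n ∨ n + 7 ≤ w ∧ w ≤ 2 * n) ∧ u = w ∨
      (w = x ∧ ¬ (7 ≤ x ∧ x ≤ n ∨ n + 7 ≤ x ∧ x ≤ 2 * n)) := by
    split_ifs at h0 <;> omega
  rcases k0 with ⟨k, k'⟩ | ⟨k, k'⟩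
  · clear k1 k2 k3
    split_ifs at h0 ⊢ <;> omega
  · clear h0
    subst k
    split_ifs <;> omega

theorem f2 (n : ℕ) (hn : 8 ≤ n) : f n hn m2 = t n 2 := by
  apply f_eq
  · intro a
    rw [t2_apply n _ hn]
    rcases a with ⟨i, b⟩ | ⟨i, b⟩ | ⟨i, b⟩
    · fin_cases i <;> cases b <;>
        simp [m2, gtau, tauP, act, emb, Equiv.swap_apply_def] <;> (try split_ifs) <;> omega
    · fin_cases i <;> cases b <;>
        simp [m2, gtau, tauP, act, emb, Equiv.swap_apply_def] <;> (try split_ifs) <;> omega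
    · have := i.isLt
      cases b <;> simp [m2, gtau, tauP, act, emb, Equiv.swap_apply_def] <;>
        (try split_ifs) <;> omega
  · rw [t2_apply n _ hn]; simp
  · intro x hx
    rw [t2_apply n _ hn]; simp [hx]

/-! ### The model group -/

def RM : Subgroup M := Subgroup.closure {(m2 * m3) ^ 3, (m3 * m4) ^ 3}
def HM : Subgroup M := Subgroup.closure {m2, m3, m4}
def CM : Subgroup M := Subgroup.closure {(m2 * m3) ^ 2, m4}

theorem swaps_gen (K : Subgroup M) (h0 : ((1 : DihedralGroup 4), swap (0 : Fin 4) 1) ∈ K)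
    (h1 : ((1 : DihedralGroup 4), swap (1 : Fin 4) 2) ∈ K)
    (h2 : ((1 : DihedralGroup 4), swap (2 : Fin 4) 3) ∈ K) (s : Perm (Fin 4)) :
    ((1 : DihedralGroup 4), s) ∈ K := by
  have hs : s ∈ Submonoid.closure (Set.range fun i : Fin 3 => swap i.castSucc i.succ) := by
    rw [Equiv.Perm.mclosure_swap_castSucc_succ]; trivial
  have hle : Submonoid.closure (Set.range fun i : Fin 3 => swap i.castSucc i.succ) ≤
      (K.comap (MonoidHom.inr (DihedralGroup 4) (Perm (Fin 4)))).toSubmonoid := by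
    rw [Submonoid.closure_le]
    rintro _ ⟨i, rfl⟩
    fin_cases i
    · exact h0
    · exact h1
    · exact h2
  exact hle hs

theorem RM_le {K : Subgroup M} (ha : (m2 * m3) ^ 3 ∈ K) (hb : (m3 * m4) ^ 3 ∈ K)
    (d : DihedralGroup 4) : ((d, 1) : M) ∈ K := by
  have e : ∀ d : DihedralGroup 4, ∃ i j : Fin 4, ((d, 1) : M) =
      ((m3 * m4) ^ 3) ^ i.val * ((m2 * m3) ^ 3) ^ j.val := by decide
  obtain ⟨i, j, h⟩ := e d
  rw [h]
  exact K.mul_mem (K.pow_mem hb _) (K.pow_mem ha _)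

theorem mem_RM (m : M) : m ∈ RM ↔ m.2 = 1 := by
  constructor
  · intro h
    have : RM ≤ (MonoidHom.snd (DihedralGroup 4) (Perm (Fin 4))).ker := by
      unfold RM
      rw [Subgroup.closure_le]
      rintro _ (rfl | rfl)
      · change ((m2 * m3) ^ 3).2 = 1
        decide
      · change ((m3 * m4) ^ 3).2 = 1
        decide
    exact this h
  · obtain ⟨d, s⟩ := m
    rintro rfl
    exact RM_le (Subgroup.subset_closure (by simp)) (Subgroup.subset_closure (by simp)) d

theorem HM_top : HM = ⊤ := by
  have h2 : m2 ∈ HM := Subgroup.subset_closure (by simp)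
  have h3 : m3 ∈ HM := Subgroup.subset_closure (by simp)
  have h4 : m4 ∈ HM := Subgroup.subset_closure (by simp)
  have hd := RM_le (K := HM) (HM.pow_mem (HM.mul_mem h2 h3) 3) (HM.pow_mem (HM.mul_mem h3 h4) 3)
  rw [eq_top_iff]
  rintro ⟨d, s⟩ -
  have hs := swaps_gen HM (by simpa [m2] using HM.mul_mem (HM.inv_mem (hd (.sr 1))) h2)
    (by simpa [m3] using HM.mul_mem (HM.inv_mem (hd (.sr 0))) h3) h4 s
  simpa using HM.mul_mem (hd d) hs

set_option maxRecDepth 100000 in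
theorem mem_CM (m : M) : m ∈ CM ↔ (m.1 = 1 ∨ m.1 = .r 2) := by
  constructor
  · have : CM ≤ (Subgroup.center (DihedralGroup 4)).comap
        (MonoidHom.fst (DihedralGroup 4) (Perm (Fin 4))) := by
      unfold CM
      rw [Subgroup.closure_le]
      rintro _ (rfl | rfl)
      · change ((m2 * m3) ^ 2).1 ∈ Subgroup.center (DihedralGroup 4)
        rw [Subgroup.mem_center_iff]
        decide
      · exact (Subgroup.center (DihedralGroup 4)).one_mem
    intro h
    have h' := this h
    change m.1 ∈ Subgroup.center (DihedralGroup 4) at h'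
    rw [Subgroup.mem_center_iff] at h'
    have e : ∀ d : DihedralGroup 4, (∀ g, g * d = d * g) → d = 1 ∨ d = .r 2 := by decide
    exact e _ h'
  · have ha : (m2 * m3) ^ 2 ∈ CM := Subgroup.subset_closure (by simp)
    have h4 : m4 ∈ CM := Subgroup.subset_closure (by simp)
    have hz : ((.r 2, 1) : M) ∈ CM := by
      have := CM.pow_mem ha 3
      rwa [show ((m2 * m3) ^ 2) ^ 3 = ((.r 2, 1) : M) by decide] at this
    have hc := CM.pow_mem ha 4
    have hc' := CM.inv_mem hc
    set c := ((m2 * m3) ^ 2) ^ 4 with hcdef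
    have k1 := CM.mul_mem (CM.mul_mem hc h4) hc'
    have k2 := CM.mul_mem (CM.mul_mem hc' h4) hc
    have hs : ∀ s, ((1 : DihedralGroup 4), s) ∈ CM := by
      apply swaps_gen CM _ _ h4
      · have := CM.mul_mem (CM.mul_mem k1 k2) k1
        rwa [show c * m4 * c⁻¹ * (c⁻¹ * m4 * c) * (c * m4 * c⁻¹) =
          ((1 : DihedralGroup 4), swap (0 : Fin 4) 1) by decide] at this
      · first
        | (have := CM.mul_mem (CM.mul_mem h4 k1) h4
           rwa [show m4 * (c * m4 * c⁻¹) * m4 =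
            ((1 : DihedralGroup 4), swap (1 : Fin 4) 2) by decide] at this)
        | (have := CM.mul_mem (CM.mul_mem h4 k2) h4
           rwa [show m4 * (c⁻¹ * m4 * c) * m4 =
            ((1 : DihedralGroup 4), swap (1 : Fin 4) 2) by decide] at this)
    obtain ⟨d, s⟩ := m
    rintro (h | h)
    · simp only at h; subst h; exact hs s
    · simp only at h; subst h; simpa using CM.mul_mem hz (hs s)

def zHom : Multiplicative (ZMod 2) →* DihedralGroup 4 where
  toFun z := .r (2 * (z.toAdd.val : ZMod 4))
  map_one' := by decide
  map_mul' := by decide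

def cHom : Multiplicative (ZMod 2) × Perm (Fin 4) →* M := zHom.prodMap (MonoidHom.id _)

theorem cHom_inj : Function.Injective cHom := by
  have h : Function.Injective zHom := by
    have : ∀ a b, zHom a = zHom b → a = b := by decide
    exact fun a b => this a b
  exact Function.Injective.prodMap h Function.injective_id

theorem cHom_range : cHom.range = CM := by
  ext ⟨d, s⟩
  rw [mem_CM]
  constructor
  · rintro ⟨⟨z, s'⟩, h⟩
    have e : ∀ z, zHom z = 1 ∨ zHom z = .r 2 := by decide
    have h1 : zHom z = d := congrArg Prod.fst h
    simp only
    rw [← h1]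
    exact e z
  · rintro (h | h)
    · simp only at h; subst h
      exact ⟨(1, s), Prod.ext (map_one zHom) rfl⟩
    · simp only at h; subst h
      exact ⟨(Multiplicative.ofAdd 1, s), Prod.ext (show zHom (Multiplicative.ofAdd 1) = .r 2 by decide) rfl⟩

theorem RM_range : (MonoidHom.inl (DihedralGroup 4) (Perm (Fin 4))).range = RM := by
  ext ⟨d, s⟩
  rw [mem_RM]
  constructor
  · rintro ⟨d', h⟩
    exact (congrArg Prod.snd h).symm
  · intro h
    simp only at h; subst h
    exact ⟨d, rfl⟩

end H234

open H234

/-- For `n ≥ 8`, the subgroup `H = ⟨t₂,t₃,t₄⟩` of `Sym(2n)` has order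
`2⁶·3 = 192`; the subgroup `R = ⟨(t₂t₃)³, (t₃t₄)³⟩` is a normal subgroup of
`H` isomorphic to the dihedral group of order `8`; and its centralizer in `H`
is `⟨(t₂t₃)², t₄⟩ ≅ ℤ₂ × Sym(4)`. -/
theorem H234_structure (n : ℕ) (hn : 8 ≤ n) :
    Nat.card (Subgroup.closure {t n 2, t n 3, t n 4} : Subgroup (Equiv.Perm ℕ)) = 192 ∧
    Subgroup.closure {(t n 2 * t n 3) ^ 3, (t n 3 * t n 4) ^ 3} ≤
      Subgroup.closure {t n 2, t n 3, t n 4} ∧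
    (∀ h ∈ Subgroup.closure {t n 2, t n 3, t n 4},
      ∀ r ∈ Subgroup.closure {(t n 2 * t n 3) ^ 3, (t n 3 * t n 4) ^ 3},
        h * r * h⁻¹ ∈ Subgroup.closure {(t n 2 * t n 3) ^ 3, (t n 3 * t n 4) ^ 3}) ∧
    Nonempty ((Subgroup.closure {(t n 2 * t n 3) ^ 3, (t n 3 * t n 4) ^ 3} :
      Subgroup (Equiv.Perm ℕ)) ≃* DihedralGroup 4) ∧
    Subgroup.centralizer
        (Subgroup.closure {(t n 2 * t n 3) ^ 3, (t n 3 * t n 4) ^ 3} : Subgroup (Equiv.Perm ℕ)) ⊓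
        Subgroup.closure {t n 2, t n 3, t n 4} =
      Subgroup.closure {(t n 2 * t n 3) ^ 2, t n 4} ∧
    Nonempty ((Subgroup.closure {(t n 2 * t n 3) ^ 2, t n 4} :
      Subgroup (Equiv.Perm ℕ)) ≃* (Multiplicative (ZMod 2) × Equiv.Perm (Fin 4))) := by
  have hH : Subgroup.closure {t n 2, t n 3, t n 4} = HM.map (f n hn) := by
    rw [HM, MonoidHom.map_closure, Set.image_insert_eq, Set.image_pair, f2, f3, f4]
  have hR : Subgroup.closure {(t n 2 * t n 3) ^ 3, (t n 3 * t n 4) ^ 3} = RM.map (f n hn) := by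
    rw [RM, MonoidHom.map_closure, Set.image_pair]
    simp only [map_pow, map_mul, f2, f3, f4]
  have hC : Subgroup.closure {(t n 2 * t n 3) ^ 2, t n 4} = CM.map (f n hn) := by
    rw [CM, MonoidHom.map_closure, Set.image_pair]
    simp only [map_pow, map_mul, f2, f3, f4]
  have hinj := f_inj n hn
  rw [hH, hR, hC]
  refine ⟨?_, ?_, ?_, ?_, ?_, ?_⟩
  · rw [← Nat.card_congr (HM.equivMapOfInjective _ hinj).toEquiv, HM_top, Subgroup.card_top,
      Nat.card_prod, DihedralGroup.nat_card, Nat.card_perm, Nat.card_fin]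
    decide
  · rw [HM_top]
    exact Subgroup.map_mono le_top
  · rintro _ ⟨h, -, rfl⟩ _ ⟨r, hr, rfl⟩
    refine ⟨h * r * h⁻¹, ?_, by simp⟩
    have hr' := (mem_RM r).1 hr
    refine (mem_RM _).2 ?_
    simp [hr']
  · exact ⟨(RM.equivMapOfInjective _ hinj).symm.trans
      ((MulEquiv.subgroupCongr RM_range.symm).trans
        (MonoidHom.ofInjective (f := MonoidHom.inl (DihedralGroup 4) (Perm (Fin 4)))
          (fun a b h => congrArg Prod.fst h)).symm)⟩
  · ext x
    rw [Subgroup.mem_inf, Subgroup.mem_centralizer_iff]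
    constructor
    · rintro ⟨hx, m, -, rfl⟩
      refine ⟨m, (mem_CM m).2 ?_, rfl⟩
      have e : ∀ d : DihedralGroup 4, (∀ g, g * d = d * g) → d = 1 ∨ d = .r 2 := by decide
      apply e
      intro g
      have := hx (f n hn (g, 1)) ⟨(g, 1), (mem_RM _).2 rfl, rfl⟩
      rw [← map_mul, ← map_mul] at this
      exact congrArg Prod.fst (hinj this)
    · rintro ⟨m, hm, rfl⟩
      refine ⟨?_, ⟨m, by rw [HM_top]; trivial, rfl⟩⟩
      rintro _ ⟨r, hr, rfl⟩
      have hr' := (mem_RM r).1 hr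
      have hm' := (mem_CM m).1 hm
      rw [← map_mul, ← map_mul]
      congr 1
      have e : ∀ g : DihedralGroup 4, g * 1 = 1 * g ∧ g * .r 2 = .r 2 * g := by decide
      refine Prod.ext ?_ ?_
      · rcases hm' with h | h
        · simp [h]
        · simpa [h] using (e r.1).2
      · simp [hr']
  · exact ⟨(CM.equivMapOfInjective _ hinj).symm.trans
      ((MulEquiv.subgroupCongr cHom_range.symm).trans (MonoidHom.ofInjective cHom_inj).symm)⟩
end
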